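/- Let k be a positive integer, let (μ_N)_{N=1}^∞ be distributions in D_c(k), and let p₁ < p₂ < ⋯ < p_N < ⋯ be positive integers. The following two statements are equivalent: (1) the p_N-fold free additive convolutions μ_N ⊞ ⋯ ⊞ μ_N converge in moments to some ν ∈ D_c(k) which is ⊞-infinitely divisible; (2) the p_N-fold Boolean convolutions μ_N ⊎ ⋯ ⊎ μ_N converge in moments to some μ ∈ D_c(k). Moreover, if (1) and (2) hold, then the resulting limits satisfy B(μ) = ν. -/

import Mathlib

open Finset

attribute [local instance] Classical.propDecidable

open scoped ComplexOrder

namespace BBP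

/-- Partitions of `{1,…,m}` modeled as `Finpartition`s of `univ : Finset (Fin m)`. -/
abbrev FP (m : ℕ) := Finpartition (Finset.univ : Finset (Fin m))

noncomputable instance (m : ℕ) : Fintype (FP m) :=
  Fintype.ofInjective (fun π : FP m => π.parts) fun a b h => by
    cases a; cases b; simpa using h

/-- `x` is the minimum of the set `C`. -/
def IsMinOf {m : ℕ} (x : Fin m) (C : Finset (Fin m)) : Prop :=
  x ∈ C ∧ ∀ y ∈ C, x ≤ y

/-- `x` is the maximum of the set `C`. -/
def IsMaxOf {m : ℕ} (x : Fin m) (C : Finset (Fin m)) : Prop :=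
  x ∈ C ∧ ∀ y ∈ C, y ≤ x

/-- `a` and `b` lie in one block of `π`. -/
def SameBlock {m : ℕ} (π : FP m) (a b : Fin m) : Prop :=
  ∃ B ∈ π.parts, a ∈ B ∧ b ∈ B

/-- `π` is non-crossing: if `i<j<k<l`, `i,k` in one block and `j,l` in one block,
then all of them are in one block. -/
def IsNC {m : ℕ} (π : FP m) : Prop :=
  ∀ i j k l : Fin m, i < j → j < k → k < l →
    SameBlock π i k → SameBlock π j l → SameBlock π i j

/-- `A` embraces `B` : `min A ≤ min B` and `max B ≤ max A`. -/
def Embraces {m : ℕ} (A B : Finset (Fin m)) : Prop :=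
  ∃ a₁ a₂ b₁ b₂ : Fin m, IsMinOf a₁ A ∧ IsMaxOf a₂ A ∧ IsMinOf b₁ B ∧ IsMaxOf b₂ B ∧
    a₁ ≤ b₁ ∧ b₂ ≤ a₂

/-- `B` strictly embraces `A` : `min B < min A` and `max A < max B`. -/
def StrictlyEmbraces {m : ℕ} (B A : Finset (Fin m)) : Prop :=
  ∃ b₁ b₂ a₁ a₂ : Fin m, IsMinOf b₁ B ∧ IsMaxOf b₂ B ∧ IsMinOf a₁ A ∧ IsMaxOf a₂ A ∧
    b₁ < a₁ ∧ a₂ < b₂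

/-- `A` is an outer block of `π`. -/
def IsOuter {m : ℕ} (π : FP m) (A : Finset (Fin m)) : Prop :=
  A ∈ π.parts ∧ ¬ ∃ B ∈ π.parts, StrictlyEmbraces B A

/-- The number `|π|_out` of outer blocks of `π`. -/
noncomputable def numOuter {m : ℕ} (π : FP m) : ℕ :=
  (π.parts.filter fun A => IsOuter π A).card

/-- Reversed refinement order: every block of `ρ` is a union of blocks of `π`. -/
def Refines {m : ℕ} (π ρ : FP m) : Prop :=
  ∀ B ∈ π.parts, ∃ C ∈ ρ.parts, B ⊆ C

/-- The partial order `π ≪ ρ`. -/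
def Ll {m : ℕ} (π ρ : FP m) : Prop :=
  Refines π ρ ∧
    ∀ C ∈ ρ.parts, ∃ B ∈ π.parts, ∃ x y : Fin m,
      IsMinOf x C ∧ IsMaxOf y C ∧ x ∈ B ∧ y ∈ B

/-- The partition `1ₙ` of `{1,…,n+1}` with a single block. -/
noncomputable def fullPart (n : ℕ) : FP (n+1) :=
  Finpartition.indiscrete (by simpa using (Finset.univ_nonempty (α := Fin (n+1))).ne_empty)

/-- `π` is an interval partition. -/
def IsIntervalPartition {m : ℕ} (π : FP m) : Prop :=
  ∀ B ∈ π.parts, ∀ x ∈ B, ∀ z ∈ B, ∀ y : Fin m, x ≤ y → y ≤ z → y ∈ B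

/-- `σ` is the permutation associated to `π` : on each block `{b₁ < ⋯ < b_q}` it is the
cycle `b₁ ↦ b₂ ↦ ⋯ ↦ b_q ↦ b₁`. -/
def IsAssocPerm {m : ℕ} (π : FP m) (σ : Equiv.Perm (Fin m)) : Prop :=
  ∀ B ∈ π.parts, ∀ b ∈ B, σ b ∈ B ∧
    ((b < σ b ∧ ∀ x ∈ B, b < x → σ b ≤ x) ∨ (IsMaxOf b B ∧ IsMinOf (σ b) B))

/-- `κ` is the Kreweras complement of `π`, characterized by `P_κ = P_π⁻¹ ∘ P_{1ₙ}`,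
where `P_{1ₙ}` is the cycle `1 ↦ 2 ↦ ⋯ ↦ n ↦ 1` (i.e. `finRotate`). -/
def IsKrewerasPair {m : ℕ} (π κ : FP m) : Prop :=
  ∃ σπ σκ : Equiv.Perm (Fin m), IsAssocPerm π σπ ∧ IsAssocPerm κ σκ ∧
    σκ = σπ⁻¹ * finRotate m

/-- the element `2a-1` of `{1,…,2n}`, in `Fin (2n)` (0-indexed). -/
def oddEmb {n : ℕ} (a : Fin n) : Fin (2*n) := ⟨2*a.val, by have := a.isLt; omega⟩

/-- the element `2a` of `{1,…,2n}`, in `Fin (2n)` (0-indexed). -/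
def evenEmb {n : ℕ} (a : Fin n) : Fin (2*n) := ⟨2*a.val + 1, by have := a.isLt; omega⟩

/-- `θ = π^(odd) ∪ ρ^(even)` : the blocks of `θ` are the sets `{2a-1 : a ∈ A}` for `A`
a block of `π` and the sets `{2b : b ∈ B}` for `B` a block of `ρ`. -/
def IsOddEvenJoin {n : ℕ} (π ρ : FP n) (θ : FP (2*n)) : Prop :=
  θ.parts = π.parts.image (fun B => B.image oddEmb) ∪
    ρ.parts.image (fun B => B.image evenEmb)

/-- a block consisting of odd elements of `{1,…,2n}` (even 0-indexed values). -/
def OddBlock {m : ℕ} (B : Finset (Fin m)) : Prop := ∀ x ∈ B, x.val % 2 = 0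

/-- a block consisting of even elements of `{1,…,2n}` (odd 0-indexed values). -/
def EvenBlock {m : ℕ} (B : Finset (Fin m)) : Prop := ∀ x ∈ B, x.val % 2 = 1

/-- every block of `θ` is contained in the odds or in the evens. -/
def ParityPreserving {m : ℕ} (θ : FP m) : Prop :=
  ∀ B ∈ θ.parts, OddBlock B ∨ EvenBlock B

def OppositeParity {m : ℕ} (A B : Finset (Fin m)) : Prop :=
  (OddBlock A ∧ EvenBlock B) ∨ (EvenBlock A ∧ OddBlock B)

def SameParity {m : ℕ} (A B : Finset (Fin m)) : Prop :=
  (OddBlock A ∧ OddBlock B) ∨ (EvenBlock A ∧ EvenBlock B)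

/-- `P = Parent_θ(A)` : the unique block `P ≠ A` of `θ` embracing `A` such that every
block `A' ≠ A` of `θ` embracing `A` also embraces `P`. -/
def IsParent {m : ℕ} (θ : FP m) (A P : Finset (Fin m)) : Prop :=
  P ∈ θ.parts ∧ P ≠ A ∧ Embraces P A ∧
    ∀ A' ∈ θ.parts, A' ≠ A → Embraces A' A → Embraces A' P

/-- `θ` has exactly two outer blocks. -/
def ExactlyTwoOuterBlocks {m : ℕ} (θ : FP m) : Prop :=
  ∃ M ∈ θ.parts, ∃ N ∈ θ.parts, M ≠ N ∧ IsOuter θ M ∧ IsOuter θ N ∧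
    ∀ A ∈ θ.parts, IsOuter θ A → A = M ∨ A = N

/-- A series in `ℂ₀⟨⟨z₁,…,z_k⟩⟩`, given by its family of coefficients: `f n w` is the
coefficient of `z_{w 0} z_{w 1} ⋯ z_{w n}` (a word of length `n+1 ≥ 1`). -/
abbrev NCSeries (k : ℕ) := (n : ℕ) → (Fin (n+1) → Fin k) → ℂ

/-- The coefficient `Cf_{w|B}(f)` of the restriction of the word `w` to the set `B`,
listing the elements of `B` in increasing order.  (Equals `1` for `B = ∅`.) -/
noncomputable def partCoeff {k m : ℕ} (f : NCSeries k) (w : Fin (m+1) → Fin k)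
    (B : Finset (Fin (m+1))) : ℂ :=
  if h : B.Nonempty then
    f (B.card - 1) (fun j =>
      w ((B.orderIsoOfFin (Nat.succ_pred_eq_of_pos (Finset.card_pos.mpr h)).symm j).1))
  else 1

/-- The generalized coefficient `Cf_{w;π}(f) = ∏_{B block of π} Cf_{w|B}(f)`. -/
noncomputable def genCoeff {k m : ℕ} (f : NCSeries k) (w : Fin (m+1) → Fin k)
    (π : FP (m+1)) : ℂ :=
  ∏ B ∈ π.parts, partCoeff f w B

/-- Linear functionals on `ℂ⟨X₁,…,X_k⟩`. -/
abbrev Dist (k : ℕ) := FreeAlgebra ℂ (Fin k) →ₗ[ℂ] ℂ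

/-- `μ ∈ D_alg(k)` : `μ` is normalized by `μ(1) = 1`. -/
def IsDalg {k : ℕ} (μ : Dist k) : Prop := μ 1 = 1

/-- The moment series `M_μ`, with `(momentSeries μ) n w = μ (X_{w 0} ⋯ X_{w n})`. -/
noncomputable def momentSeries {k : ℕ} (μ : Dist k) : NCSeries k :=
  fun _ w => μ ((List.ofFn fun j => FreeAlgebra.ι ℂ (w j)).prod)

/-- `f = R_μ` : the moments of `μ` are obtained from `f` by summation over all
non-crossing partitions. -/
def IsRTransform {k : ℕ} (μ : Dist k) (f : NCSeries k) : Prop :=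
  ∀ (n : ℕ) (w : Fin (n+1) → Fin k),
    momentSeries μ n w = ∑ π : FP (n+1), if IsNC π then genCoeff f w π else 0

/-- `g = η_μ` : the moments of `μ` are obtained from `g` by summation over all
interval partitions. -/
def IsEtaSeries {k : ℕ} (μ : Dist k) (g : NCSeries k) : Prop :=
  ∀ (n : ℕ) (w : Fin (n+1) → Fin k),
    momentSeries μ n w = ∑ π : FP (n+1), if IsIntervalPartition π then genCoeff g w π else 0

/-- `μ ∈ D_c(k)` : `μ` is the joint distribution of a `k`-tuple of selfadjoint elements
with respect to a state on a unital C*-algebra. -/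
def IsDc {k : ℕ} (μ : Dist k) : Prop :=
  IsDalg μ ∧
  ∃ (A : Type) (_ : NormedRing A) (_ : StarRing A) (_ : CStarRing A)
    (_ : NormedAlgebra ℂ A) (_ : StarModule ℂ A) (_ : CompleteSpace A)
    (φ : A →ₗ[ℂ] ℂ) (x : Fin k → A),
      φ 1 = 1 ∧ (∀ a : A, 0 ≤ φ (star a * a)) ∧ (∀ i, IsSelfAdjoint (x i)) ∧
      ∀ (n : ℕ) (w : Fin (n+1) → Fin k),
        momentSeries μ n w = φ ((List.ofFn fun j => x (w j)).prod)

/-- convergence in moments. -/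
def ConvInMoments {k : ℕ} (μseq : ℕ → Dist k) (μ : Dist k) : Prop :=
  ∀ P : FreeAlgebra ℂ (Fin k),
    Filter.Tendsto (fun N => μseq N P) Filter.atTop (nhds (μ P))

/-- coefficientwise convergence of series. -/
def ConvCoeffwise {k : ℕ} (fseq : ℕ → NCSeries k) (f : NCSeries k) : Prop :=
  ∀ (n : ℕ) (w : Fin (n+1) → Fin k),
    Filter.Tendsto (fun N => fseq N n w) Filter.atTop (nhds (f n w))

/-- `ν` is the `p`-fold free additive convolution `μ ⊞ ⋯ ⊞ μ`, i.e. `R_ν = p · R_μ`. -/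
def IsNFoldFree {k : ℕ} (p : ℕ) (μ ν : Dist k) : Prop :=
  ∃ f : NCSeries k, IsRTransform μ f ∧ IsRTransform ν (fun n w => (p : ℂ) * f n w)

/-- `ν` is the `p`-fold Boolean convolution `μ ⊎ ⋯ ⊎ μ`, i.e. `η_ν = p · η_μ`. -/
def IsNFoldBool {k : ℕ} (p : ℕ) (μ ν : Dist k) : Prop :=
  ∃ g : NCSeries k, IsEtaSeries μ g ∧ IsEtaSeries ν (fun n w => (p : ℂ) * g n w)

/-- `ν = 𝔹(μ)` : the Boolean Bercovici–Pata bijection, `R_{𝔹(μ)} = η_μ`. -/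
def IsBP {k : ℕ} (μ ν : Dist k) : Prop :=
  ∃ f : NCSeries k, IsEtaSeries μ f ∧ IsRTransform ν f

/-- `μ ∈ D_c(k)` is infinitely divisible with respect to `⊞`. -/
def IsInfDiv {k : ℕ} (μ : Dist k) : Prop :=
  IsDc μ ∧ ∀ N : ℕ, 0 < N → ∃ ν : Dist k, IsDc ν ∧ IsNFoldFree N ν μ

/-- `g = Reta(f)`, i.e. there is `μ ∈ D_alg(k)` with `f = R_μ` and `g = η_μ`. -/
def RetaRel {k : ℕ} (f g : NCSeries k) : Prop :=
  ∃ μ : Dist k, IsDalg μ ∧ IsRTransform μ f ∧ IsEtaSeries μ g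

/-!
Summing over non-crossing or interval partitions, one can read the partition from left to right
while keeping track of the stack of blocks which will be continued. The resulting recursion,
`fockMoment ε L`, expresses the moments by the free cumulants `L` if `ε = 1` and by the Boolean
cumulants if `ε = 0`, so that the two convolutions are treated at once.

If `L N` are the cumulants of `μ_N`, then the convergence of the moments with cumulants
`p_N • L N` amounts to that of `p_N • L N` itself. As `p_N → ∞`, the products of several cumulants
become negligible, so this is also equivalent to the convergence of `p_N` times the moments of
`μ_N`, with the same limit `Λ`. The latter condition does not involve `ε`: the free and the
Boolean powers converge simultaneously, and `Λ` is both the family of Boolean cumulants of `μ` and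
that of free cumulants of `ν`, that is, `B(μ) = ν`.

It remains to see that the limits are in `D_c(k)`. As a limit of multiples of moments, `Λ` is
conditionally positive. Hence the stacks of blocks span a pre-Hilbert space, a Fock space, in which
reading a letter is a symmetric operator and `fockMoment ε Λ` is a vacuum expectation; the bounds
`‖Λ u‖ ≤ D ^ |u|` make the moments grow geometrically, and the GNS construction applies. The same
argument for `Λ / N` gives the infinite divisibility.
-/

open Filter Topology

/-! ### Positive semidefinite kernels -/

theorem posSemidef_of_tendsto {ι S : Type*} {l : Filter ι} [l.NeBot] {K : ι → Matrix S S ℂ}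
    {K' : Matrix S S ℂ} (hK : ∀ i, (K i).PosSemidef)
    (hlim : ∀ s t, Tendsto (fun i => K i s t) l (𝓝 (K' s t))) : K'.PosSemidef := by
  refine ⟨Matrix.IsHermitian.ext fun s t => ?_, fun x => ?_⟩
  · exact tendsto_nhds_unique (((hlim t s).star).congr fun i => (hK i).isHermitian.apply s t)
      (hlim s t)
  · exact ge_of_tendsto' (tendsto_finsetSum _ fun s _ => tendsto_finsetSum _ fun t _ =>
      ((hlim s t).const_mul _).mul_const _) fun i => (hK i).2 x

theorem inner_linearCombination {S H : Type*} [NormedAddCommGroup H] [InnerProductSpace ℂ H]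
    (e : S → H) (x y : S →₀ ℂ) :
    inner ℂ (Finsupp.linearCombination ℂ e x) (Finsupp.linearCombination ℂ e y) =
      x.sum fun s a => y.sum fun t b => star a * Matrix.gram ℂ e s t * b := by
  rw [Finsupp.linearCombination_apply, Finsupp.linearCombination_apply, Finsupp.sum, sum_inner]
  refine sum_congr rfl fun s _ => ?_
  rw [Finsupp.sum, inner_sum]
  refine sum_congr rfl fun t _ => ?_
  simp only [inner_smul_left, inner_smul_right, Matrix.gram_apply, starRingEnd_apply]
  ring

theorem posSemidef_gram {S H : Type*} [NormedAddCommGroup H] [InnerProductSpace ℂ H]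
    (e : S → H) : (Matrix.gram ℂ e).PosSemidef :=
  ⟨Matrix.isHermitian_gram ℂ e, fun x => by
    rw [← inner_linearCombination, inner_self_eq_norm_sq_to_K]
    positivity⟩

/-- Moore–Aronszajn, phrased with a family of vectors instead of point evaluations. -/
theorem exists_gram_eq.{u} {S : Type u} {K : Matrix S S ℂ} (hK : K.PosSemidef) :
    ∃ (H : Type u) (_ : NormedAddCommGroup H) (_ : InnerProductSpace ℂ H) (_ : CompleteSpace H)
      (e : S → H), Matrix.gram ℂ e = K ∧ DenseRange (Finsupp.linearCombination ℂ e) := by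
  let K' : Matrix S S (ℂ →L[ℂ] ℂ) := .of fun s t => K s t • ContinuousLinearMap.id ℂ ℂ
  have hK' : K'.PosSemidef := by
    have criterion := (RKHS.posSemidef_tfae (K := K')).out 0 2
    refine criterion.mpr ⟨Matrix.IsHermitian.ext fun s t => ?_, fun x => ?_⟩
    · simp only [K', Matrix.of_apply]
      rw [← hK.isHermitian.apply s t, star_smul]
      congr 1
      exact star_one (ℂ →L[ℂ] ℂ)
    · refine (Complex.nonneg_iff.mp (hK.2 x)).1.trans_eq (congrArg Complex.re ?_)
      refine Finsupp.sum_congr fun s _ => Finsupp.sum_congr fun t _ => ?_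
      have := hK.isHermitian.apply s t
      simp only [K', Matrix.of_apply, ← this, RCLike.star_def, FunLike.coe_smul,
        ContinuousLinearMap.coe_id', Pi.smul_apply, id_eq, smul_eq_mul, RCLike.inner_apply,
        map_mul]
      ring
  have : Fact K'.PosSemidef := ⟨hK'⟩
  refine ⟨RKHS.OfKernel K', inferInstance, inferInstance, inferInstance,
    fun s => RKHS.kerFun (RKHS.OfKernel K') s 1, ?_, ?_⟩
  · ext s t
    rw [Matrix.gram_apply, ← RKHS.kernel_inner, RKHS.OfKernel.kernel_ofKernel,
      ← hK.isHermitian.apply]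
    simp [K']
  · have dense := RKHS.kerFun_dense (RKHS.OfKernel K')
    rw [DenseRange, ← LinearMap.coe_range, Finsupp.range_linearCombination]
    refine (Submodule.dense_iff_topologicalClosure_eq_top.mpr dense).mono ?_
    refine Submodule.span_le.mpr ?_
    rintro _ ⟨s, c, rfl⟩
    rw [← mul_one c, ← smul_eq_mul, map_smul]
    exact Submodule.smul_mem _ c (Submodule.subset_span ⟨s, rfl⟩)

/-! ### Symmetric operators of geometric growth -/

theorem le_mul_of_logConvex {a : ℕ → ℝ} {C D : ℝ} (ha : ∀ n, 0 ≤ a n) (hC : 0 ≤ C)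
    (hconvex : ∀ n, a (n + 1) ^ 2 ≤ a n * a (n + 2)) (hgrowth : ∀ n, a n ≤ D * C ^ n) :
    a 1 ≤ C * a 0 := by
  by_contra! hlt
  have ha₁ : 0 < a 1 := (mul_nonneg hC (ha 0)).trans_lt hlt
  have ha₀ : 0 < a 0 := by
    refine (ha 0).lt_of_ne fun h => ?_
    have := hconvex 0
    rw [← h, zero_mul] at this
    exact this.not_gt (pow_pos ha₁ 2)
  set q := a 1 / a 0
  have hq_pos : 0 < q := div_pos ha₁ ha₀
  have hCq : C < q := (lt_div_iff₀ ha₀).mpr hlt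
  have hratio : ∀ n, 0 < a n ∧ q * a n ≤ a (n + 1) := by
    intro n
    induction n with
    | zero => exact ⟨ha₀, (div_mul_cancel₀ _ ha₀.ne').le⟩
    | succ n ih =>
      have hpos : 0 < a (n + 1) := (mul_pos hq_pos ih.1).trans_le ih.2
      refine ⟨hpos, le_of_mul_le_mul_left ?_ ih.1⟩
      nlinarith [hconvex n, ih.2]
  have hpow : ∀ n, q ^ n * a 0 ≤ D * C ^ n := fun n => by
    refine le_trans ?_ (hgrowth n)
    induction n with
    | zero => simp
    | succ n ih =>
      rw [pow_succ', mul_assoc]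
      exact (mul_le_mul_of_nonneg_left ih hq_pos.le).trans (hratio n).2
  have hlim : Tendsto (fun n => D * (C / q) ^ n) atTop (𝓝 0) := by
    simpa using (tendsto_pow_atTop_nhds_zero_of_lt_one (div_nonneg hC hq_pos.le)
      ((div_lt_one hq_pos).mpr hCq)).const_mul D
  refine ha₀.not_ge (ge_of_tendsto' hlim fun n => ?_)
  rw [div_pow, ← mul_div_assoc, le_div_iff₀ (pow_pos hq_pos n), mul_comm]
  exact hpow n

section SymmetricOperators

variable {S V H : Type*} [AddCommGroup V] [Module ℂ V] [NormedAddCommGroup H]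
  [InnerProductSpace ℂ H]

theorem norm_map_le_of_symmetric {ι : V →ₗ[ℂ] H} {T : Module.End ℂ V} {C D : ℝ} (hC : 0 ≤ C)
    (hsymm : ∀ x y, inner ℂ (ι (T x)) (ι y) = inner ℂ (ι x) (ι (T y))) {x : V}
    (hgrowth : ∀ n, ‖ι ((T ^ n) x)‖ ≤ D * C ^ n) : ‖ι (T x)‖ ≤ C * ‖ι x‖ := by
  refine le_mul_of_logConvex (a := fun n => ‖ι ((T ^ n) x)‖) (fun _ => norm_nonneg _) hC
    (fun n => ?_) hgrowth
  calc ‖ι ((T ^ (n + 1)) x)‖ ^ 2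
      = ‖inner ℂ (ι (T ((T ^ n) x))) (ι ((T ^ (n + 1)) x))‖ := by
        rw [← Module.End.mul_apply, ← pow_succ', inner_self_eq_norm_sq_to_K, norm_pow]
        simp
    _ = ‖inner ℂ (ι ((T ^ n) x)) (ι ((T ^ (n + 2)) x))‖ := by
        rw [hsymm, ← Module.End.mul_apply T, ← pow_succ' T (n + 1)]
    _ ≤ _ := norm_inner_le_norm _ _

theorem inner_linearCombination_comm {e : S → H} {T : Module.End ℂ (S →₀ ℂ)}
    (h : ∀ s t, inner ℂ (Finsupp.linearCombination ℂ e (T (Finsupp.single s 1))) (e t) =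
      inner ℂ (e s) (Finsupp.linearCombination ℂ e (T (Finsupp.single t 1)))) (x y : S →₀ ℂ) :
    inner ℂ (Finsupp.linearCombination ℂ e (T x)) (Finsupp.linearCombination ℂ e y) =
      inner ℂ (Finsupp.linearCombination ℂ e x) (Finsupp.linearCombination ℂ e (T y)) := by
  have hsingle : ∀ (s : S) (a : ℂ), Finsupp.single s a = a • Finsupp.single s 1 := by simp
  induction x using Finsupp.induction_linear with
  | zero => simp
  | add x₁ x₂ h₁ h₂ => simp only [map_add, inner_add_left, h₁, h₂]
  | single s a =>
    induction y using Finsupp.induction_linear with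
    | zero => simp
    | add y₁ y₂ h₁ h₂ => simp only [map_add, inner_add_right, h₁, h₂]
    | single t b =>
      simp only [hsingle s a, hsingle t b, map_smul, inner_smul_left, inner_smul_right,
        Finsupp.linearCombination_single, one_smul, h]

theorem exists_isSelfAdjoint_extension [CompleteSpace H] {ι : V →ₗ[ℂ] H} (hι : DenseRange ι)
    {T : Module.End ℂ V} {C : ℝ} (hbound : ∀ x, ‖ι (T x)‖ ≤ C * ‖ι x‖)
    (hsymm : ∀ x y, inner ℂ (ι (T x)) (ι y) = inner ℂ (ι x) (ι (T y))) :
    ∃ A : H →L[ℂ] H, IsSelfAdjoint A ∧ ∀ x, A (ι x) = ι (T x) := by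
  have hext := LinearMap.extendOfNorm_eq (f := ι ∘ₗ T) hι ⟨C, hbound⟩
  refine ⟨(ι ∘ₗ T).extendOfNorm ι, ?_, hext⟩
  refine ContinuousLinearMap.isSelfAdjoint_iff_isSymmetric.mpr fun a b => ?_
  refine hι.induction_on₂ (p := fun a b => inner ℂ ((ι ∘ₗ T).extendOfNorm ι a) b =
    inner ℂ a ((ι ∘ₗ T).extendOfNorm ι b)) ?_ (fun x y => ?_) a b
  · exact isClosed_eq (by fun_prop) (by fun_prop)
  · rw [hext, hext]
    exact hsymm x y

end SymmetricOperators

/-! ### Distributions in `D_c(k)` and positive definite moments -/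

section WordKernel

variable {α : Type*} {M : List α → ℂ}

/-- The kernel `(u, v) ↦ M(u* v)` of a function `M` on words, where reversal plays the role of
the involution since the letters stand for selfadjoint elements. -/
def wordKernel (M : List α → ℂ) : Matrix (List α) (List α) ℂ :=
  .of fun u v => M (u.reverse ++ v)

/-- The operator `X_w ↦ X_a X_w` on the span of the words. -/
noncomputable def consOperator (a : α) : Module.End ℂ (List α →₀ ℂ) :=
  Finsupp.lmapDomain ℂ ℂ (List.cons a)

variable {H : Type*} [NormedAddCommGroup H] [InnerProductSpace ℂ H] {e : List α → H}

theorem inner_eq_of_gram_eq_wordKernel (he : Matrix.gram ℂ e = wordKernel M) (u v : List α) :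
    inner ℂ (e u) (e v) = M (u.reverse ++ v) := by
  rw [← Matrix.gram_apply, he]
  rfl

theorem linearCombination_consOperator_single (a : α) (w : List α) (c : ℂ) :
    Finsupp.linearCombination ℂ e (consOperator a (Finsupp.single w c)) = c • e (a :: w) := by
  simp [consOperator]

theorem inner_consOperator_comm (he : Matrix.gram ℂ e = wordKernel M) (a : α)
    (x y : List α →₀ ℂ) :
    inner ℂ (Finsupp.linearCombination ℂ e (consOperator a x))
        (Finsupp.linearCombination ℂ e y) =
      inner ℂ (Finsupp.linearCombination ℂ e x)
        (Finsupp.linearCombination ℂ e (consOperator a y)) :=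
  inner_linearCombination_comm (fun s t => by
    simp [linearCombination_consOperator_single, inner_eq_of_gram_eq_wordKernel he]) x y

theorem norm_le_of_gram_eq_wordKernel (he : Matrix.gram ℂ e = wordKernel M) {C : ℝ} (hC : 0 ≤ C)
    (hM : ∀ w, ‖M w‖ ≤ C ^ w.length) (w : List α) : ‖e w‖ ≤ C ^ w.length := by
  refine le_of_sq_le_sq ?_ (pow_nonneg hC _)
  calc ‖e w‖ ^ 2 = ‖inner ℂ (e w) (e w)‖ := by rw [inner_self_eq_norm_sq_to_K]; simp
    _ = ‖M (w.reverse ++ w)‖ := by rw [inner_eq_of_gram_eq_wordKernel he]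
    _ ≤ C ^ (w.reverse ++ w).length := hM _
    _ = (C ^ w.length) ^ 2 := by rw [List.length_append, List.length_reverse]; ring

theorem exists_norm_consOperator_pow_le (he : Matrix.gram ℂ e = wordKernel M) {C : ℝ}
    (hC : 0 ≤ C) (hM : ∀ w, ‖M w‖ ≤ C ^ w.length) (a : α) (x : List α →₀ ℂ) :
    ∃ D, ∀ n, ‖Finsupp.linearCombination ℂ e ((consOperator a ^ n) x)‖ ≤ D * C ^ n := by
  induction x using Finsupp.induction_linear with
  | zero => exact ⟨0, by simp⟩
  | add x y hx hy =>
    obtain ⟨D, hD⟩ := hx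
    obtain ⟨D', hD'⟩ := hy
    refine ⟨D + D', fun n => ?_⟩
    rw [map_add, map_add, add_mul]
    exact (norm_add_le _ _).trans (add_le_add (hD n) (hD' n))
  | single w c =>
    have hpow : ∀ n, (consOperator a ^ n) (Finsupp.single w c) =
        Finsupp.single (List.replicate n a ++ w) c := fun n => by
      induction n with
      | zero => simp
      | succ n ih =>
        rw [pow_succ', Module.End.mul_apply, ih]
        simp [consOperator, List.replicate_succ]
    refine ⟨‖c‖ * C ^ w.length, fun n => ?_⟩
    rw [hpow, Finsupp.linearCombination_single, norm_smul, mul_assoc, ← pow_add]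
    refine mul_le_mul_of_nonneg_left ?_ (norm_nonneg c)
    simpa [add_comm] using norm_le_of_gram_eq_wordKernel he hC hM (List.replicate n a ++ w)

theorem exists_selfAdjoint_of_posSemidef_wordKernel {α : Type} {M : List α → ℂ}
    (hM : (wordKernel M).PosSemidef) {C : ℝ} (hC : 0 ≤ C) (hgrowth : ∀ w, ‖M w‖ ≤ C ^ w.length) :
    ∃ (H : Type) (_ : NormedAddCommGroup H) (_ : InnerProductSpace ℂ H) (_ : CompleteSpace H)
      (Ω : H) (A : α → H →L[ℂ] H), (∀ a, IsSelfAdjoint (A a)) ∧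
      ∀ w, inner ℂ Ω ((w.map A).prod Ω) = M w := by
  obtain ⟨H, _, _, _, e, he, hdense⟩ := exists_gram_eq hM
  have hbound : ∀ a x, ‖Finsupp.linearCombination ℂ e (consOperator a x)‖ ≤
      C * ‖Finsupp.linearCombination ℂ e x‖ := fun a x =>
    norm_map_le_of_symmetric hC (inner_consOperator_comm he a)
      (exists_norm_consOperator_pow_le he hC hgrowth a x).choose_spec
  choose A hA hext using fun a =>
    exists_isSelfAdjoint_extension hdense (hbound a) (inner_consOperator_comm he a)
  have hAe : ∀ a w, A a (e w) = e (a :: w) := fun a w => by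
    simpa [linearCombination_consOperator_single] using hext a (Finsupp.single w 1)
  have hword : ∀ w, (w.map A).prod (e []) = e w := fun w => by
    induction w with
    | nil => rfl
    | cons a w ih => rw [List.map_cons, List.prod_cons, mul_apply_eq_comp, ih, hAe]
  exact ⟨H, inferInstance, inferInstance, inferInstance, e [], A, hA, fun w => by
    rw [hword, inner_eq_of_gram_eq_wordKernel he, List.reverse_nil, List.nil_append]⟩

end WordKernel

section Symmetric

variable {α V : Type*} [AddCommGroup V] [Module ℂ V] {H : Type*} [NormedAddCommGroup H]
  [InnerProductSpace ℂ H] {ι : V →ₗ[ℂ] H} {A : α → Module.End ℂ V}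

theorem inner_prod_map_comm
    (hA : ∀ a x y, inner ℂ (ι (A a x)) (ι y) = inner ℂ (ι x) (ι (A a y))) (w : List α) (x y : V) :
    inner ℂ (ι ((w.map A).prod x)) (ι y) = inner ℂ (ι x) (ι ((w.reverse.map A).prod y)) := by
  induction w generalizing y with
  | nil => rfl
  | cons a w ih =>
    simp only [List.map_cons, List.prod_cons, Module.End.mul_apply, List.reverse_cons,
      List.map_append, List.prod_append, List.map_nil, List.prod_nil, mul_one]
    rw [hA, ih]

theorem posSemidef_wordKernel_of_symmetric
    (hA : ∀ a x y, inner ℂ (ι (A a x)) (ι y) = inner ℂ (ι x) (ι (A a y))) (Ω : V) :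
    (wordKernel fun w => inner ℂ (ι Ω) (ι ((w.map A).prod Ω))).PosSemidef := by
  have hgram : wordKernel (fun w => inner ℂ (ι Ω) (ι ((w.map A).prod Ω))) =
      Matrix.gram ℂ fun w : List α => ι ((w.map A).prod Ω) := by
    ext u v
    simp [Matrix.gram_apply, inner_prod_map_comm hA, wordKernel]
  rw [hgram]
  exact posSemidef_gram _

end Symmetric

section Moments

variable {k : ℕ}

/-- The moments of `μ`, as a function on words: `w ↦ μ(X_{w₁} ⋯ X_{wₙ})`. -/
noncomputable def wordMoment (μ : Dist k) (w : List (Fin k)) : ℂ :=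
  μ (w.map (FreeAlgebra.ι ℂ)).prod

theorem momentSeries_eq_wordMoment (μ : Dist k) {n : ℕ} (w : Fin (n + 1) → Fin k) :
    momentSeries μ n w = wordMoment μ (List.ofFn w) := by
  simp [momentSeries, wordMoment, List.map_ofFn, Function.comp_def]

theorem convInMoments_iff_wordMoment {μseq : ℕ → Dist k} {μ : Dist k} :
    ConvInMoments μseq μ ↔
      ∀ w, Tendsto (fun N => wordMoment (μseq N) w) atTop (𝓝 (wordMoment μ w)) := by
  refine ⟨fun h w => h _, fun h P => ?_⟩
  have hP : P ∈ Subalgebra.toSubmodule (Algebra.adjoin ℂ (Set.range (FreeAlgebra.ι ℂ))) := by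
    rw [FreeAlgebra.adjoin_range_ι]
    trivial
  rw [Algebra.adjoin_eq_span] at hP
  induction hP using Submodule.span_induction with
  | mem x hx =>
    obtain ⟨l, hl, rfl⟩ := Submonoid.exists_list_of_mem_closure hx
    obtain ⟨w, rfl⟩ : l ∈ Set.range (List.map (FreeAlgebra.ι ℂ)) := by
      rwa [Set.range_list_map]
    exact h w
  | zero => simp
  | add x y _ _ hx hy => simpa using hx.add hy
  | smul c x _ hx => simpa using hx.const_mul c

/-- The GNS construction, with the matching growth condition making the operators bounded. -/
theorem exists_isDc {M : List (Fin k) → ℂ} (hnil : M [] = 1) (hM : (wordKernel M).PosSemidef)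
    {C : ℝ} (hC : 0 ≤ C) (hgrowth : ∀ w, ‖M w‖ ≤ C ^ w.length) :
    ∃ μ : Dist k, IsDc μ ∧ wordMoment μ = M := by
  obtain ⟨H, _, _, _, Ω, A, hA, hmoment⟩ :=
    exists_selfAdjoint_of_posSemidef_wordKernel hM hC hgrowth
  let φ : (H →L[ℂ] H) →ₗ[ℂ] ℂ :=
    innerₛₗ ℂ Ω ∘ₗ (ContinuousLinearMap.apply ℂ H Ω).toLinearMap
  let μ : Dist k := φ ∘ₗ (FreeAlgebra.lift ℂ A).toLinearMap
  have hμ : ∀ w, wordMoment μ w = φ (w.map A).prod := fun w => by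
    simp [μ, wordMoment, map_list_prod, Function.comp_def]
  have hφ : ∀ w : List (Fin k), φ (w.map A).prod = M w := hmoment
  have hφ_one : φ 1 = 1 := (hφ []).trans hnil
  refine ⟨μ, ⟨(hμ []).trans hφ_one, H →L[ℂ] H, inferInstance, inferInstance, inferInstance,
    inferInstance, inferInstance, inferInstance, φ, A, hφ_one, fun T => ?_, hA, fun n w => ?_⟩,
    funext fun w => (hμ w).trans (hφ w)⟩
  · change 0 ≤ inner ℂ Ω ((star T * T) Ω)
    rw [mul_apply_eq_comp, ContinuousLinearMap.star_eq_adjoint,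
      ContinuousLinearMap.adjoint_inner_right, inner_self_eq_norm_sq_to_K]
    positivity
  · rw [momentSeries_eq_wordMoment, hμ, List.map_ofFn]
    rfl

end Moments

section Dc

variable {k : ℕ} {μ : Dist k}

theorem exists_selfAdjoint_of_isDc (hμ : IsDc μ) :
    ∃ (H : Type) (_ : NormedAddCommGroup H) (_ : InnerProductSpace ℂ H) (_ : CompleteSpace H)
      (Ω : H) (A : Fin k → H →L[ℂ] H), (∀ a, IsSelfAdjoint (A a)) ∧
      ∀ w, inner ℂ Ω ((w.map A).prod Ω) = wordMoment μ w := by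
  obtain ⟨hone, A, _, _, _, _, _, _, φ, x, hφ_one, hφ, hx, hmoment⟩ := hμ
  let _ : CStarAlgebra A := { }
  let _ : PartialOrder A := CStarAlgebra.spectralOrder A
  let _ : StarOrderedRing A := CStarAlgebra.spectralOrderedRing A
  let f : A →ₚ[ℂ] ℂ := PositiveLinearMap.mk₀ φ fun a ha => by
    obtain ⟨b, rfl⟩ := CStarAlgebra.nonneg_iff_eq_star_mul_self.mp ha
    exact hφ b
  refine ⟨f.GNS, inferInstance, inferInstance, inferInstance,
    (f.toPreGNS 1 : f.PreGNS), fun a => f.gnsStarAlgHom (x a), fun a => ?_, fun w => ?_⟩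
  · exact (hx a).map f.gnsStarAlgHom
  · have hprod : (w.map fun a => f.gnsStarAlgHom (x a)).prod =
        f.gnsStarAlgHom (w.map x).prod := by
      rw [map_list_prod, List.map_map]
      rfl
    have hvector : inner ℂ (f.toPreGNS 1 : f.GNS)
        (f.gnsStarAlgHom (w.map x).prod (f.toPreGNS 1 : f.PreGNS)) = f (w.map x).prod := by
      simp [PositiveLinearMap.preGNS_inner_def]
    rw [hprod, hvector]
    change φ (w.map x).prod = wordMoment μ w
    cases w with
    | nil => exact hφ_one.trans hone.symm
    | cons a w =>
      have hword := hmoment w.length (a :: w).get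
      rw [momentSeries_eq_wordMoment, List.ofFn_get] at hword
      rw [hword, ← List.ofFn_get ((a :: w).map x)]
      simp [List.ofFn_succ]

theorem posSemidef_wordKernel_wordMoment (hμ : IsDc μ) :
    (wordKernel (wordMoment μ)).PosSemidef := by
  obtain ⟨H, _, _, _, Ω, A, hA, hmoment⟩ := exists_selfAdjoint_of_isDc hμ
  have h := posSemidef_wordKernel_of_symmetric (ι := LinearMap.id (R := ℂ))
    (A := fun a => (A a).toLinearMap) (fun a x y => (hA a).isSymmetric x y) Ω
  have hprod : ∀ w : List (Fin k), (w.map fun a => (A a).toLinearMap).prod =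
      ((w.map A).prod).toLinearMap := fun w => by
    induction w with
    | nil => rfl
    | cons a w ih => rw [List.map_cons, List.prod_cons, ih]; rfl
  simpa [hprod, hmoment] using h

theorem star_apply_of_posSemidef_wordKernel {α : Type*} {M : List α → ℂ}
    (hM : (wordKernel M).PosSemidef) (w : List α) : star (M w) = M w.reverse := by
  simpa [wordKernel] using hM.isHermitian.apply w []

theorem exists_norm_wordMoment_le (hμ : IsDc μ) :
    ∃ C : ℝ, 0 ≤ C ∧ ∀ w, ‖wordMoment μ w‖ ≤ C ^ w.length := by
  obtain ⟨H, _, _, _, Ω, A, -, hmoment⟩ := exists_selfAdjoint_of_isDc hμ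
  have hΩ : ‖Ω‖ ^ 2 = 1 := by
    have h := (hmoment []).trans hμ.1
    rw [List.map_nil, List.prod_nil, one_apply_eq_self, inner_self_eq_norm_sq_to_K] at h
    exact Complex.ofReal_injective (by push_cast; exact h)
  have hvector : ∀ w : List (Fin k),
      ‖(w.map A).prod Ω‖ ≤ (∑ a, ‖A a‖) ^ w.length * ‖Ω‖ := fun w => by
    induction w with
    | nil => simp
    | cons a w ih =>
      rw [List.map_cons, List.prod_cons, mul_apply_eq_comp, List.length_cons, pow_succ', mul_assoc]
      exact (A a).le_of_opNorm_le_of_le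
        (single_le_sum (fun a _ => norm_nonneg (A a)) (mem_univ a)) ih
  refine ⟨∑ a, ‖A a‖, by positivity, fun w => ?_⟩
  calc ‖wordMoment μ w‖ ≤ ‖Ω‖ * ‖(w.map A).prod Ω‖ := hmoment w ▸ norm_inner_le_norm _ _
    _ ≤ ‖Ω‖ * ((∑ a, ‖A a‖) ^ w.length * ‖Ω‖) := by gcongr; exact hvector w
    _ = (∑ a, ‖A a‖) ^ w.length := by rw [mul_left_comm, ← sq, hΩ, mul_one]

end Dc

/-! ### The Fock recursion -/

section Fock

variable {α : Type*}

/-- The weight of closing a block when the stack `s` of blocks is still open around it: `ε = 1`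
gives the non-crossing partitions, `ε = 0` kills the inner blocks and gives the interval ones. -/
def closeCoeff {β : Type*} (ε : ℂ) : List β → ℂ
  | [] => 1
  | _ :: _ => ε

/-- The top block `u` of the stack `u :: s` either stays open or is closed, which costs the
cumulant `L u`; the remaining evolution of the stack is evaluated by `F`. -/
def openOrClose (ε : ℂ) (L : List α → ℂ) (F : List (List α) → ℂ) (u : List α)
    (s : List (List α)) : ℂ :=
  F (u :: s) + closeCoeff ε s * L u * F s

/-- The sum of the contributions of all ways to complete the stack `s` of open blocks while
reading the word `w`: each letter starts a new block or is appended to the top block, which may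
then be closed. On the empty stack it is the moment of `w` for the cumulants `L`. -/
def fockMoment (ε : ℂ) (L : List α → ℂ) : List α → List (List α) → ℂ
  | [], [] => 1
  | [], _ :: _ => 0
  | x :: w, [] => openOrClose ε L (fockMoment ε L w) [x] []
  | x :: w, u :: s => openOrClose ε L (fockMoment ε L w) [x] (u :: s) +
      openOrClose ε L (fockMoment ε L w) (u ++ [x]) s

/-- The contribution of the words following an outer block which has `u` as its beginning. -/
def blockMoment (ε : ℂ) (L : List α → ℂ) (u w : List α) : ℂ :=
  openOrClose ε L (fockMoment ε L w) u []

/-- The sum of `f g y r` over all decompositions `w = g ++ y :: r`. -/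
def splitSum {R : Type*} [AddCommMonoid R] (f : List α → α → List α → R) (w : List α) : R :=
  ∑ i : Fin w.length, f (w.take i) w[i] (w.drop (i + 1))

variable {ε : ℂ} {L : List α → ℂ}

theorem splitSum_cons {R : Type*} [AddCommMonoid R] (f : List α → α → List α → R) (x : α)
    (w : List α) :
    splitSum f (x :: w) = f [] x w + splitSum (fun g y r => f (x :: g) y r) w :=
  Fin.sum_univ_succ _

theorem blockMoment_nil (u : List α) : blockMoment ε L u [] = L u := by
  simp [blockMoment, openOrClose, closeCoeff, fockMoment]

theorem mul_closeCoeff (hε : IsIdempotentElem ε) {β : Type*} (s : List β) :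
    ε * closeCoeff ε s = ε := by
  cases s with
  | nil => exact mul_one ε
  | cons => exact hε

/-- First-return decomposition: `w` is read as `g`, during which only the blocks in `t` are
completed, followed by the first letter appended to the block `u`. -/
theorem fockMoment_append_cons (hε : IsIdempotentElem ε) (w : List α) (t : List (List α))
    (u : List α) (s : List (List α)) :
    fockMoment ε L w (t ++ u :: s) = splitSum (fun g x r =>
      closeCoeff ε g * closeCoeff ε t * fockMoment ε L g t *
        openOrClose ε L (fockMoment ε L r) (u ++ [x]) s) w := by
  induction w generalizing t with
  | nil => cases t <;> rfl
  | cons y w ih =>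
    have hopen : ∀ v t, openOrClose ε L (fockMoment ε L w) v (t ++ u :: s) =
        splitSum (fun g x r => ε * openOrClose ε L (fockMoment ε L g) v t *
          openOrClose ε L (fockMoment ε L r) (u ++ [x]) s) w := fun v t => by
      have hcoeff : closeCoeff ε (t ++ u :: s) = ε := by cases t <;> rfl
      rw [openOrClose, hcoeff, ← List.cons_append, ih, ih]
      simp only [splitSum, mul_sum, ← sum_add_distrib]
      refine sum_congr rfl fun i _ => ?_
      have hcons : closeCoeff ε (v :: t) = ε := rfl
      rw [hcons, openOrClose.eq_1 (u := v)]
      linear_combination (fockMoment ε L (w.take i) (v :: t) +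
        closeCoeff ε t * L v * fockMoment ε L (w.take i) t) *
        openOrClose ε L (fockMoment ε L (w.drop (i + 1))) (u ++ [w[i]]) s *
        mul_closeCoeff hε (w.take i)
    have hcoeff : ∀ g, closeCoeff ε (y :: g) * closeCoeff ε t = ε := fun _ => mul_closeCoeff hε t
    simp only [splitSum_cons, hcoeff]
    cases t with
    | nil =>
      have := hopen [y] []
      rw [List.nil_append] at this
      simp [fockMoment, this, closeCoeff, add_comm]
    | cons v t =>
      simp only [List.cons_append, fockMoment]
      rw [← List.cons_append, hopen, hopen]
      simp [splitSum, ← sum_add_distrib, mul_add, add_mul]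

theorem blockMoment_cons (hε : IsIdempotentElem ε) (u : List α) (x : α) (w : List α) :
    blockMoment ε L u (x :: w) = L u * fockMoment ε L (x :: w) [] +
      blockMoment ε L (u ++ [x]) w +
      ε * splitSum (fun g y r => fockMoment ε L (x :: g) [] * blockMoment ε L (u ++ [y]) r) w := by
  have h := fockMoment_append_cons (L := L) hε (x :: w) [] u []
  rw [List.nil_append, splitSum_cons] at h
  rw [blockMoment, openOrClose, h]
  simp only [closeCoeff, blockMoment, splitSum, mul_sum, fockMoment, mul_one, one_mul, mul_assoc]
  ring

theorem blockMoment_append (hε : IsIdempotentElem ε) (u : List α) (x : α) (w : List α) :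
    blockMoment ε L (u ++ [x]) w = blockMoment ε L u (x :: w) -
      blockMoment ε L u [] * fockMoment ε L (x :: w) [] -
      ε * splitSum (fun g y r => fockMoment ε L (x :: g) [] * blockMoment ε L (u ++ [y]) r) w := by
  rw [blockMoment_cons hε, blockMoment_nil]
  ring

/-- Together with `blockMoment_append` this derives estimates of the cumulants
`blockMoment ε L u []` from estimates of the moments `blockMoment ε L [x] w`. -/
theorem append_induction {P : List α → List α → Prop} (singleton : ∀ x w, P [x] w)
    (append : ∀ u x w, u ≠ [] → (∀ w', P u w') →
      (∀ i : Fin w.length, P (u ++ [w[i]]) (w.drop (i + 1))) → P (u ++ [x]) w)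
    {u : List α} (hu : u ≠ []) (w : List α) : P u w := by
  induction u using List.reverseRecOn generalizing w with
  | nil => contradiction
  | append_singleton u x ihu =>
    rcases eq_or_ne u [] with rfl | hne
    · exact singleton x w
    · induction hn : w.length using Nat.strong_induction_on generalizing w x with
      | _ n ihn =>
        exact append u x w hne (ihu hne) fun i => ihn _ (by simp; omega) _ (by simp) _ rfl

end Fock

section FockLimits

variable {α ι : Type*} {l : Filter ι} {ε : ℂ} {L : ι → List α → ℂ} {Λ : List α → ℂ}

theorem tendsto_openOrClose {F : ι → List (List α) → ℂ} {G : List (List α) → ℂ} {u : List α}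
    (hL : Tendsto (L · u) l (𝓝 (Λ u))) (hF : ∀ s, Tendsto (F · s) l (𝓝 (G s)))
    (s : List (List α)) :
    Tendsto (fun i => openOrClose ε (L i) (F i) u s) l (𝓝 (openOrClose ε Λ G u s)) :=
  (hF _).add ((hL.const_mul _).mul (hF _))

theorem tendsto_fockMoment (hL : ∀ u ≠ [], Tendsto (L · u) l (𝓝 (Λ u))) (w : List α)
    (s : List (List α)) :
    Tendsto (fun i => fockMoment ε (L i) w s) l (𝓝 (fockMoment ε Λ w s)) := by
  induction w generalizing s with
  | nil => cases s <;> exact tendsto_const_nhds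
  | cons x w ih =>
    cases s with
    | nil => exact tendsto_openOrClose (hL _ (by simp)) ih _
    | cons u s =>
      exact (tendsto_openOrClose (hL _ (by simp)) ih _).add
        (tendsto_openOrClose (hL _ (by simp)) ih _)

theorem exists_tendsto_of_fockMoment (hε : IsIdempotentElem ε)
    (h : ∀ w, ∃ c, Tendsto (fun i => fockMoment ε (L i) w []) l (𝓝 c)) {u : List α}
    (hu : u ≠ []) : ∃ c, Tendsto (L · u) l (𝓝 c) := by
  suffices hblock : ∀ w, ∃ c, Tendsto (fun i => blockMoment ε (L i) u w) l (𝓝 c) by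
    simpa only [blockMoment_nil] using hblock []
  refine fun w => append_induction
    (P := fun u w => ∃ c, Tendsto (fun i => blockMoment ε (L i) u w) l (𝓝 c))
    (fun x w => h (x :: w)) (fun u x w _ hu hw => ?_) hu w
  choose a ha using hu
  choose b hb using hw
  choose c hc using h
  exact ⟨_, (((ha _).sub ((ha _).mul (hc _))).sub ((tendsto_finsetSum univ
    fun (j : Fin w.length) _ => (hc (x :: w.take j)).mul (hb j)).const_mul ε)).congr
      fun i => (blockMoment_append hε u x w).symm⟩

theorem tendsto_zero_of_tendsto_mul {p f : ι → ℂ} (hp : Tendsto p l (Bornology.cobounded ℂ))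
    {c : ℂ} (h : Tendsto (fun i => p i * f i) l (𝓝 c)) : Tendsto f l (𝓝 0) := by
  have hlim := (tendsto_inv₀_cobounded.comp hp).mul h
  rw [zero_mul] at hlim
  refine hlim.congr' ?_
  filter_upwards [hp.eventually_ne_cobounded 0] with i hi
  exact inv_mul_cancel_left₀ hi _

variable {p : ι → ℂ}

theorem tendsto_mul_splitSum {f : ι → List α → ℂ} {b : ι → List α → List α → ℂ}
    {B : List α → List α → ℂ} {u w : List α}
    (hf : ∀ j : Fin w.length, Tendsto (fun i => f i (w.take j)) l (𝓝 0))
    (hb : ∀ j : Fin w.length, Tendsto (fun i => p i * b i (u ++ [w[j]]) (w.drop (j + 1))) l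
      (𝓝 (B (u ++ [w[j]]) (w.drop (j + 1))))) :
    Tendsto (fun i => p i * splitSum (fun g y r => f i g * b i (u ++ [y]) r) w) l (𝓝 0) := by
  have hlim := tendsto_finsetSum univ fun j _ => (hf j).mul (hb j)
  simp only [zero_mul, sum_const_zero] at hlim
  refine hlim.congr fun i => ?_
  rw [splitSum, mul_sum]
  exact sum_congr rfl fun j _ => mul_left_comm _ _ _

theorem tendsto_mul_of_tendsto_mul_fockMoment (hε : IsIdempotentElem ε)
    (hp : Tendsto p l (Bornology.cobounded ℂ))
    (h : ∀ w ≠ [], Tendsto (fun i => p i * fockMoment ε (L i) w []) l (𝓝 (Λ w))) {u : List α}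
    (hu : u ≠ []) : Tendsto (fun i => p i * L i u) l (𝓝 (Λ u)) := by
  suffices hblock : ∀ w, Tendsto (fun i => p i * blockMoment ε (L i) u w) l (𝓝 (Λ (u ++ w))) by
    simpa only [blockMoment_nil, List.append_nil] using hblock []
  refine fun w => append_induction (P := fun u w =>
    Tendsto (fun i => p i * blockMoment ε (L i) u w) l (𝓝 (Λ (u ++ w))))
    (fun x w => h (x :: w) (by simp)) (fun u x w _ hu hw => ?_) hu w
  have hzero : ∀ w ≠ [], Tendsto (fun i => fockMoment ε (L i) w []) l (𝓝 0) := fun w hw =>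
    tendsto_zero_of_tendsto_mul hp (h w hw)
  have hlim := ((hu (x :: w)).sub ((hu []).mul (hzero (x :: w) (by simp)))).sub
    ((tendsto_mul_splitSum (f := fun i g => fockMoment ε (L i) (x :: g) [])
      (b := fun i => blockMoment ε (L i)) (B := fun u w => Λ (u ++ w))
      (fun j => hzero (x :: w.take j) (by simp)) hw).const_mul ε)
  rw [mul_zero, mul_zero, sub_zero, sub_zero, List.append_cons] at hlim
  refine hlim.congr fun i => ?_
  rw [blockMoment_append hε]
  ring

theorem tendsto_mul_blockMoment (hε : IsIdempotentElem ε)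
    (hp : Tendsto p l (Bornology.cobounded ℂ))
    (h : ∀ u ≠ [], Tendsto (fun i => p i * L i u) l (𝓝 (Λ u))) {u : List α} (hu : u ≠ [])
    (w : List α) :
    Tendsto (fun i => p i * blockMoment ε (L i) u w) l (𝓝 (Λ (u ++ w))) := by
  induction hn : w.length using Nat.strong_induction_on generalizing u w with
  | _ n ih =>
    cases w with
    | nil => simpa only [blockMoment_nil, List.append_nil] using h u hu
    | cons x w =>
      have hzero : ∀ g : List α, g.length ≤ w.length →
          Tendsto (fun i => fockMoment ε (L i) (x :: g) []) l (𝓝 0) := fun g hg =>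
        tendsto_zero_of_tendsto_mul hp
          (ih g.length (by simp at hn; omega) (u := [x]) (by simp) g rfl)
      have hlim := (((h u hu).mul (hzero w le_rfl)).add
        (ih w.length (by simp at hn; omega) (u := u ++ [x]) (by simp) w rfl)).add
        ((tendsto_mul_splitSum (f := fun i g => fockMoment ε (L i) (x :: g) [])
          (b := fun i => blockMoment ε (L i)) (B := fun u w => Λ (u ++ w))
          (fun j => hzero (w.take j) (by simp))
          fun j => ih _ (by simp at hn ⊢; omega) (u := u ++ [w[j]]) (by simp)
            (w.drop (j + 1)) rfl).const_mul ε)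
      rw [mul_zero, mul_zero, add_zero, zero_add, ← List.append_cons] at hlim
      refine hlim.congr fun i => ?_
      rw [blockMoment_cons hε]
      ring

theorem tendsto_mul_fockMoment (hε : IsIdempotentElem ε)
    (hp : Tendsto p l (Bornology.cobounded ℂ))
    (h : ∀ u ≠ [], Tendsto (fun i => p i * L i u) l (𝓝 (Λ u))) {w : List α} (hw : w ≠ []) :
    Tendsto (fun i => p i * fockMoment ε (L i) w []) l (𝓝 (Λ w)) := by
  obtain ⟨x, w, rfl⟩ := List.exists_cons_of_ne_nil hw
  exact tendsto_mul_blockMoment hε hp h (List.cons_ne_nil x []) w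

end FockLimits

section FockBounds

variable {α : Type*} {ε : ℂ} {L : List α → ℂ} {C : ℝ}

theorem norm_splitSum_le {f : List α → α → List α → ℂ} {w : List α} {B : ℝ} (hB : 0 ≤ B)
    (hC : 0 ≤ C)
    (hf : ∀ i : Fin w.length, ‖f (w.take i) w[i] (w.drop (i + 1))‖ ≤
      B * (C ^ (i + 1 : ℕ) * (3 * C) ^ (w.length - (i + 1)))) :
    ‖splitSum f w‖ ≤ B * (3 * C) ^ w.length / 2 := by
  have hsum : ∑ i : Fin w.length, (3 : ℝ) ^ (w.length - (i + 1)) ≤ 3 ^ w.length / 2 := by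
    rw [Fin.sum_univ_eq_sum_range fun i => (3 : ℝ) ^ (w.length - (i + 1))]
    have hreflect := sum_range_reflect (fun i => (3 : ℝ) ^ i) w.length
    simp only [Nat.sub_sub, add_comm 1] at hreflect
    rw [hreflect, geom_sum_eq (by norm_num)]
    linarith
  calc ‖splitSum f w‖ ≤ ∑ i : Fin w.length, B * C ^ w.length * 3 ^ (w.length - (i + 1)) := by
        refine norm_sum_le_of_le _ fun i _ => (hf i).trans_eq ?_
        rw [mul_pow, mul_assoc, ← mul_assoc (C ^ _), mul_right_comm, ← pow_add,
          Nat.add_sub_cancel' i.isLt]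
    _ ≤ B * C ^ w.length * (3 ^ w.length / 2) := by
        rw [← mul_sum]
        gcongr
    _ = B * (3 * C) ^ w.length / 2 := by
        rw [mul_pow]
        ring

theorem norm_blockMoment_le (hε : IsIdempotentElem ε) (hε1 : ‖ε‖ ≤ 1) (hC : 0 ≤ C)
    (h : ∀ w, ‖fockMoment ε L w []‖ ≤ C ^ w.length) {u : List α} (hu : u ≠ []) (w : List α) :
    ‖blockMoment ε L u w‖ ≤ (12 * C) ^ u.length * (3 * C) ^ w.length := by
  have hpow : ∀ n : ℕ, C ^ n ≤ (3 * C) ^ n := fun n => pow_le_pow_left₀ hC (by linarith) n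
  refine append_induction (P := fun u w => ‖blockMoment ε L u w‖ ≤
    (12 * C) ^ u.length * (3 * C) ^ w.length) (fun x w => ?_) (fun u x w _ hu hw => ?_) hu w
  · calc ‖blockMoment ε L [x] w‖ ≤ C * C ^ w.length := (h (x :: w)).trans_eq (pow_succ' _ _)
      _ ≤ (12 * C) ^ [x].length * (3 * C) ^ w.length := by
        rw [List.length_singleton, pow_one]
        exact mul_le_mul (by linarith) (hpow _) (by positivity) (by positivity)
  · have hclosed : ‖blockMoment ε L u [] * fockMoment ε L (x :: w) []‖ ≤
        (12 * C) ^ u.length * (3 * C) ^ (w.length + 1) := by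
      rw [norm_mul]
      refine mul_le_mul ((hu []).trans_eq ?_) ((h _).trans (hpow _)) (norm_nonneg _)
        (by positivity)
      rw [List.length_nil, pow_zero, mul_one]
    have hsplit : ‖ε * splitSum (fun g y r => fockMoment ε L (x :: g) [] *
        blockMoment ε L (u ++ [y]) r) w‖ ≤
          (12 * C) ^ (u.length + 1) * (3 * C) ^ w.length / 2 := by
      rw [norm_mul]
      refine (mul_le_of_le_one_left (norm_nonneg _) hε1).trans
        (norm_splitSum_le (by positivity) hC fun i => ?_)
      have hlen : (x :: w.take i).length = i + 1 := by simp
      rw [norm_mul, mul_left_comm]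
      have hb := hw i
      rw [List.length_append, List.length_singleton, List.length_drop] at hb
      exact mul_le_mul ((h _).trans_eq (by rw [hlen])) hb (norm_nonneg _) (by positivity)
    rw [blockMoment_append hε]
    refine (norm_sub_le _ _).trans ((add_le_add ((norm_sub_le _ _).trans
      (add_le_add (hu (x :: w)) hclosed)) hsplit).trans_eq ?_)
    simp only [List.length_cons, List.length_append, List.length_nil]
    ring

theorem norm_le_of_norm_fockMoment_le (hε : IsIdempotentElem ε) (hε1 : ‖ε‖ ≤ 1) (hC : 0 ≤ C)
    (h : ∀ w, ‖fockMoment ε L w []‖ ≤ C ^ w.length) {u : List α} (hu : u ≠ []) :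
    ‖L u‖ ≤ (12 * C) ^ u.length := by
  simpa [blockMoment_nil] using norm_blockMoment_le hε hε1 hC h hu []

theorem norm_openOrClose_le (hε1 : ‖ε‖ ≤ 1) {F : List (List α) → ℂ} (u : List α)
    (s : List (List α)) : ‖openOrClose ε L F u s‖ ≤ ‖F (u :: s)‖ + ‖L u‖ * ‖F s‖ := by
  have hcoeff : ‖closeCoeff ε s‖ ≤ 1 := by
    cases s with
    | nil => simp [closeCoeff]
    | cons => exact hε1
  rw [openOrClose, mul_assoc]
  refine (norm_add_le _ _).trans (add_le_add_right ?_ _)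
  rw [norm_mul, norm_mul]
  exact mul_le_of_le_one_left (by positivity) hcoeff

theorem norm_fockMoment_le (hε1 : ‖ε‖ ≤ 1) (hC : 0 ≤ C)
    (h : ∀ u ≠ [], ‖L u‖ ≤ C ^ u.length) (w : List α) (s : List (List α)) :
    ‖fockMoment ε L w s‖ ≤ (4 * C) ^ w.length * C ^ s.flatten.length := by
  induction w generalizing s with
  | nil => cases s <;> simp [fockMoment, pow_nonneg hC]
  | cons x w ih =>
    have hstep : ∀ u ≠ [], ∀ s, ‖openOrClose ε L (fockMoment ε L w) u s‖ ≤
        2 * ((4 * C) ^ w.length * C ^ (u.length + s.flatten.length)) := fun u hu s =>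
      calc ‖openOrClose ε L (fockMoment ε L w) u s‖
          ≤ ‖fockMoment ε L w (u :: s)‖ + ‖L u‖ * ‖fockMoment ε L w s‖ :=
            norm_openOrClose_le hε1 u s
        _ ≤ (4 * C) ^ w.length * C ^ (u :: s).flatten.length +
            C ^ u.length * ((4 * C) ^ w.length * C ^ s.flatten.length) :=
            add_le_add (ih _) (mul_le_mul (h u hu) (ih s) (norm_nonneg _) (by positivity))
        _ = 2 * ((4 * C) ^ w.length * C ^ (u.length + s.flatten.length)) := by
            rw [List.flatten_cons, List.length_append, pow_add]
            ring
    cases s with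
    | nil =>
      refine (hstep [x] (by simp) []).trans ?_
      simp only [List.length_cons, List.length_nil, List.flatten_nil, pow_succ, pow_zero]
      nlinarith [mul_nonneg (pow_nonneg (mul_nonneg (by norm_num : (0 : ℝ) ≤ 4) hC) w.length) hC]
    | cons u s =>
      refine (norm_add_le _ _).trans ((add_le_add (hstep [x] (by simp) (u :: s))
        (hstep (u ++ [x]) (by simp) s)).trans_eq ?_)
      simp only [List.length_cons, List.length_append, List.length_nil, List.flatten_cons]
      ring

end FockBounds

/-! ### Positivity of the Fock recursion -/

section StackKernel

variable {β : Type*} {ε : ℂ} {κ : Matrix β β ℂ}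

/-- One step of the recursion defining `stackKernel`: the tops of two nonempty stacks are compared
by `κ` and their tails by `K`. -/
def stackStep (ε : ℂ) (κ : Matrix β β ℂ) (K : Matrix (List β) (List β) ℂ) :
    Matrix (List β) (List β) ℂ
  | [], [] => 1
  | u :: s, v :: t => κ u v * (closeCoeff ε s * closeCoeff ε t * K s t)
  | _, _ => 0

/-- The kernel on stacks of blocks induced by a kernel `κ` on blocks, for which opening and closing
blocks are adjoint to each other. Stacks of different heights are orthogonal. -/
def stackKernel (ε : ℂ) (κ : Matrix β β ℂ) : Matrix (List β) (List β) ℂ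
  | [], [] => 1
  | u :: s, v :: t => κ u v * (closeCoeff ε s * closeCoeff ε t * stackKernel ε κ s t)
  | [], _ :: _ => 0
  | _ :: _, [] => 0

theorem star_closeCoeff (hε : star ε = ε) (s : List β) :
    star (closeCoeff ε s) = closeCoeff ε s := by
  cases s with
  | nil => exact star_one ℂ
  | cons => exact hε

theorem posSemidef_stackStep (hε : star ε = ε) (hκ : κ.PosSemidef)
    {K : Matrix (List β) (List β) ℂ} (hK : K.PosSemidef) : (stackStep ε κ K).PosSemidef := by
  obtain ⟨H, _, _, _, e, rfl, -⟩ := exists_gram_eq hκ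
  let vacuum : List β → ℂ := fun s => s.casesOn 1 fun _ _ => 0
  let top : List β → H := fun s => s.casesOn 0 fun u _ => e u
  have hcoeff : ∀ s t : List β, inner ℂ (closeCoeff ε s) (closeCoeff ε t) =
      closeCoeff ε s * closeCoeff ε t := fun s t => by
    rw [RCLike.inner_apply', starRingEnd_apply, star_closeCoeff hε]
  have hstep : stackStep ε (Matrix.gram ℂ e) K = Matrix.gram ℂ vacuum +
      (Matrix.gram ℂ top).hadamard
        (((Matrix.gram ℂ (closeCoeff ε)).hadamard K).submatrix List.tail List.tail) := by
    ext s t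
    cases s <;> cases t <;> simp [stackStep, vacuum, top, Matrix.gram_apply, hcoeff,
      -RCLike.inner_apply]
  rw [hstep]
  exact (posSemidef_gram _).add ((posSemidef_gram _).hadamard
    (((posSemidef_gram _).hadamard hK).submatrix _))

theorem closeCoeff_mul_stackKernel (s t : List β) :
    closeCoeff ε s * stackKernel ε κ s t = closeCoeff ε t * stackKernel ε κ s t := by
  cases s <;> cases t <;> simp [stackKernel, closeCoeff]

theorem stackKernel_cons_cons (hε : IsIdempotentElem ε) (u v : β) (s t : List β) :
    stackKernel ε κ (u :: s) (v :: t) = κ u v * (closeCoeff ε s * stackKernel ε κ s t) := by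
  have hidem : closeCoeff ε s * closeCoeff ε s = closeCoeff ε s := by
    cases s with
    | nil => exact mul_one 1
    | cons => exact hε
  rw [stackKernel, mul_assoc, ← closeCoeff_mul_stackKernel, ← mul_assoc (closeCoeff ε s), hidem]

theorem stackStep_iterate_apply {n : ℕ} {s : List β} (hs : s.length < n) (t : List β) :
    (stackStep ε κ)^[n] 0 s t = stackKernel ε κ s t := by
  induction n generalizing s t with
  | zero => contradiction
  | succ n ih =>
    rw [Function.iterate_succ_apply']
    rcases s with _ | ⟨u, s⟩ <;> rcases t with _ | ⟨v, t⟩ <;>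
      simp only [stackStep, stackKernel]
    rw [ih (by simpa using hs)]

theorem posSemidef_stackKernel (hε : star ε = ε) (hκ : κ.PosSemidef) :
    (stackKernel ε κ).PosSemidef := by
  refine posSemidef_of_tendsto (l := atTop) (K := fun n => (stackStep ε κ)^[n] 0) (fun n => ?_)
    fun s t => tendsto_const_nhds.congr' ?_
  · induction n with
    | zero => exact .zero
    | succ n ih =>
      rw [Function.iterate_succ_apply']
      exact posSemidef_stackStep hε hκ ih
  · filter_upwards [eventually_gt_atTop s.length] with n hn
    exact (stackStep_iterate_apply hn t).symm

end StackKernel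

section FockSpace

variable {α : Type*} {ε : ℂ} {L : List α → ℂ}

/-- The words which can form the part of a block that has been read. -/
abbrev NonemptyWord (α : Type*) := {u : List α // u ≠ []}

/-- The block consisting of the single letter `x`. -/
def NonemptyWord.singleton (x : α) : NonemptyWord α := ⟨[x], by simp⟩

/-- The block `u` with the letter `x` appended. -/
def NonemptyWord.concat (u : NonemptyWord α) (x : α) : NonemptyWord α := ⟨u ++ [x], by simp⟩

/-- The kernel of a single block: the cumulant of `v` followed by the involution of `u`. -/
def blockKernel (L : List α → ℂ) : Matrix (NonemptyWord α) (NonemptyWord α) ℂ :=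
  .of fun u v => L (v ++ (u : List α).reverse)

/-- The vector counterpart of `openOrClose`. -/
noncomputable def openOrCloseVector (ε : ℂ) (L : List α → ℂ) (u : NonemptyWord α)
    (s : List (NonemptyWord α)) : List (NonemptyWord α) →₀ ℂ :=
  .single (u :: s) 1 + .single s (closeCoeff ε s * L u)

/-- The image of the stack `s` under reading the letter `x`, mirroring `fockMoment`. -/
noncomputable def letterVector (ε : ℂ) (L : List α → ℂ) (x : α) :
    List (NonemptyWord α) → List (NonemptyWord α) →₀ ℂ
  | [] => openOrCloseVector ε L (.singleton x) []
  | u :: s => openOrCloseVector ε L (.singleton x) (u :: s) +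
      openOrCloseVector ε L (u.concat x) s

/-- The operator on the free module of stacks which represents the letter `x`. -/
noncomputable def letterOperator (ε : ℂ) (L : List α → ℂ) (x : α) :
    Module.End ℂ (List (NonemptyWord α) →₀ ℂ) :=
  Finsupp.linearCombination ℂ (letterVector ε L x)

theorem letterOperator_single (x : α) (s : List (NonemptyWord α)) :
    letterOperator ε L x (.single s 1) = letterVector ε L x s := by
  simp [letterOperator]

variable {H : Type*} [NormedAddCommGroup H] [InnerProductSpace ℂ H]
  {e : List (NonemptyWord α) → H}

theorem inner_linearCombination_openOrCloseVector (y : H) (u : NonemptyWord α)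
    (s : List (NonemptyWord α)) :
    inner ℂ y (Finsupp.linearCombination ℂ e (openOrCloseVector ε L u s)) =
      inner ℂ y (e (u :: s)) + closeCoeff ε s * L u * inner ℂ y (e s) := by
  simp only [openOrCloseVector, map_add, Finsupp.linearCombination_single, one_smul,
    inner_add_right, inner_smul_right]

theorem inner_letterVector_comm (hε : IsIdempotentElem ε) (hε' : star ε = ε)
    (hL : ∀ u ≠ [], star (L u) = L u.reverse)
    (he : Matrix.gram ℂ e = stackKernel ε (blockKernel L)) (x : α) (s t : List (NonemptyWord α)) :
    inner ℂ (Finsupp.linearCombination ℂ e (letterVector ε L x s)) (e t) =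
      inner ℂ (e s) (Finsupp.linearCombination ℂ e (letterVector ε L x t)) := by
  have hK : ∀ s t, inner ℂ (e s) (e t) = stackKernel ε (blockKernel L) s t := fun s t => by
    rw [← he, Matrix.gram_apply]
  have hKstar : ∀ s t, star (stackKernel ε (blockKernel L) s t) =
      stackKernel ε (blockKernel L) t s := fun s t => by
    rw [← hK, ← hK, ← inner_conj_symm (e t)]; rfl
  have hκ : ∀ u v, blockKernel L u v = L (v ++ (u : List α).reverse) := fun u v => rfl
  have hx : star (L [x]) = L [x] := hL _ (by simp)
  have hu : ∀ u : NonemptyWord α, star (L (u ++ [x])) = L (x :: (u : List α).reverse) :=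
    fun u => (hL _ (by simp)).trans (by simp)
  have hright : ∀ v t, stackKernel ε (blockKernel L) [] (v :: t) = 0 := fun v t => rfl
  have hleft : ∀ u s, stackKernel ε (blockKernel L) (u :: s) [] = 0 := fun u s => rfl
  have hnil : closeCoeff ε ([] : List (NonemptyWord α)) = 1 := rfl
  have hcons : ∀ (u : NonemptyWord α) s, closeCoeff ε (u :: s) = ε := fun u s => rfl
  have hcomm := closeCoeff_mul_stackKernel (ε := ε) (κ := blockKernel L)
  rw [← inner_conj_symm, starRingEnd_apply]
  rcases s with _ | ⟨u, s⟩ <;> rcases t with _ | ⟨v, t⟩ <;>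
  simp only [letterVector, map_add, inner_add_right, inner_linearCombination_openOrCloseVector, hK,
    star_add, star_mul', hKstar, star_closeCoeff hε', hx, hu, NonemptyWord.singleton,
    NonemptyWord.concat] <;>
  simp only [stackKernel_cons_cons hε, hright, hleft, hκ, hnil, hcons,
    List.reverse_append, List.reverse_singleton, List.singleton_append, List.append_assoc]
  · linear_combination L (v ++ [x]) * (hcomm [] t - stackKernel ε (blockKernel L) [] t * hnil)
  · ring
  · linear_combination L (v ++ [x]) *
      (hcomm (u :: s) t - stackKernel ε (blockKernel L) (u :: s) t * hcons u s)

/-- `fockMoment` as the vacuum coefficient of a product of the letters, of which the first one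
acts first. -/
theorem inner_prod_letterOperator_single
    (he : Matrix.gram ℂ e = stackKernel ε (blockKernel L)) (w : List α)
    (s : List (NonemptyWord α)) :
    inner ℂ (e []) (Finsupp.linearCombination ℂ e
      ((w.reverse.map (letterOperator ε L)).prod (.single s 1))) =
    fockMoment ε L w (s.map Subtype.val) := by
  have hcoeff : ∀ s : List (NonemptyWord α),
      closeCoeff ε s = closeCoeff ε (s.map Subtype.val) := fun s => by cases s <;> rfl
  induction w generalizing s with
  | nil =>
    have hK : inner ℂ (e []) (e s) = stackKernel ε (blockKernel L) [] s := by
      rw [← he, Matrix.gram_apply]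
    cases s <;> simp [hK, stackKernel, fockMoment, -inner_self_eq_norm_sq_to_K]
  | cons x w ih =>
    have hstep : ∀ u s, inner ℂ (e []) (Finsupp.linearCombination ℂ e
        ((w.reverse.map (letterOperator ε L)).prod (openOrCloseVector ε L u s))) =
        openOrClose ε L (fockMoment ε L w) u (s.map Subtype.val) := fun u s => by
      rw [openOrCloseVector, ← mul_one (closeCoeff ε s * L u), ← smul_eq_mul (a := _ * _),
        ← Finsupp.smul_single, map_add, map_smul, map_add, map_smul, inner_add_right,
        inner_smul_right, ih, ih, openOrClose, hcoeff]
      rfl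
    rw [List.reverse_cons, List.map_append, List.prod_append, List.map_singleton,
      List.prod_singleton, Module.End.mul_apply, letterOperator_single]
    cases s with
    | nil => exact hstep _ _
    | cons u s => rw [letterVector, map_add, map_add, inner_add_right, hstep, hstep]; rfl

/-- Conditional positivity: `L` is hermitian, and positive definite on the polynomials without
constant term. Unlike positive definiteness, it survives in the limits of `p N • M N` for moments
`M N` and `p N → ∞`, since it ignores the value on the empty word. -/
structure IsConditionallyPositive (L : List α → ℂ) : Prop where
  posSemidef : ((wordKernel L).submatrix (Subtype.val : NonemptyWord α → List α)
    Subtype.val).PosSemidef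
  star_apply : ∀ u ≠ [], star (L u) = L u.reverse

theorem IsConditionallyPositive.posSemidef_blockKernel (hL : IsConditionallyPositive L) :
    (blockKernel L).PosSemidef := by
  let rev : NonemptyWord α → NonemptyWord α := fun u => ⟨(u : List α).reverse, by simpa using u.2⟩
  have hblock : blockKernel L =
      (((wordKernel L).submatrix Subtype.val Subtype.val).submatrix rev rev).transpose := by
    ext u v
    simp [blockKernel, wordKernel, rev]
  rw [hblock]
  exact (hL.posSemidef.submatrix rev).transpose

theorem IsConditionallyPositive.posSemidef_wordKernel_fockMoment
    (hL : IsConditionallyPositive L) (hε : IsIdempotentElem ε) (hε' : star ε = ε) :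
    (wordKernel fun w => fockMoment ε L w []).PosSemidef := by
  obtain ⟨H, _, _, _, e, hgram, -⟩ :=
    exists_gram_eq (posSemidef_stackKernel hε' hL.posSemidef_blockKernel)
  have h := posSemidef_wordKernel_of_symmetric (A := letterOperator ε L)
    (ι := Finsupp.linearCombination ℂ e) (fun x => inner_linearCombination_comm fun s t => by
      simpa only [letterOperator_single] using
        inner_letterVector_comm hε hε' hL.star_apply hgram x s t)
    (.single [] 1)
  have hfock : wordKernel (fun w => fockMoment ε L w []) =
      (wordKernel fun w => inner ℂ (Finsupp.linearCombination ℂ e (.single [] 1))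
        (Finsupp.linearCombination ℂ e ((w.map (letterOperator ε L)).prod
          (.single [] 1)))).transpose := by
    ext u v
    have hmoment := inner_prod_letterOperator_single hgram (u.reverse ++ v) []
    simpa [wordKernel] using hmoment.symm
  rw [hfock]
  exact h.transpose

end FockSpace

/-! ### Reading a non-crossing partition from left to right -/

section Partitions

variable {m : ℕ} {π ρ : FP m} {B T : Finset (Fin m)} {x y z : Fin m}

theorem sameBlock_iff_mem (hB : B ∈ π.parts) (hx : x ∈ B) : SameBlock π x y ↔ y ∈ B := by
  refine ⟨fun ⟨B', hB', hx', hy'⟩ => ?_, fun hy => ⟨B, hB, hx, hy⟩⟩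
  rwa [π.eq_of_mem_parts hB hB' hx hx']

theorem SameBlock.symm (h : SameBlock π x y) : SameBlock π y x :=
  let ⟨B, hB, hx, hy⟩ := h
  ⟨B, hB, hy, hx⟩

theorem SameBlock.trans (hxy : SameBlock π x y) (hyz : SameBlock π y z) : SameBlock π x z :=
  let ⟨B, hB, hx, hy⟩ := hxy
  ⟨B, hB, hx, (sameBlock_iff_mem hB hy).mp hyz⟩

theorem sameBlock_self (x : Fin m) : SameBlock π x x :=
  ⟨π.part x, π.part_mem.mpr (mem_univ x), π.mem_part (mem_univ x), π.mem_part (mem_univ x)⟩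

theorem eq_of_sameBlock_iff (h : ∀ x y, SameBlock π x y ↔ SameBlock ρ x y) : π = ρ := by
  suffices hsub : ∀ π ρ : FP m, (∀ x y, SameBlock π x y ↔ SameBlock ρ x y) → π.parts ⊆ ρ.parts from
    Finpartition.ext (Subset.antisymm (hsub π ρ h) (hsub ρ π fun x y => (h x y).symm))
  intro π ρ h B hB
  obtain ⟨x, hx⟩ := π.nonempty_of_mem_parts hB
  obtain ⟨A, hA, hxA⟩ := ρ.exists_mem (mem_univ x)
  suffices hAB : A = B from hAB ▸ hA
  ext y
  rw [← sameBlock_iff_mem hA hxA, ← sameBlock_iff_mem hB hx, h]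

/-- The partition which has `T` as a block and in which the blocks of `ρ` lose their elements
in `T`. -/
def isolate (ρ : FP m) (T : Finset (Fin m)) (hT : T.Nonempty) : FP m :=
  (ρ.avoid T).extend hT.ne_empty disjoint_sdiff_self_left (sdiff_sup_cancel le_top)

theorem mem_parts_isolate (hT : T.Nonempty) :
    B ∈ (isolate ρ T hT).parts ↔ B = T ∨ ∃ D ∈ ρ.parts, ¬ D ≤ T ∧ D \ T = B := by
  rw [isolate, Finpartition.extend_parts, mem_insert, Finpartition.mem_avoid]

theorem mem_parts_isolate_of_disjoint (hT : T.Nonempty) (hB : B ∈ ρ.parts) (h : Disjoint B T) :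
    B ∈ (isolate ρ T hT).parts := by
  refine (mem_parts_isolate hT).mpr (.inr ⟨B, hB, fun hle => ?_, sdiff_eq_self_of_disjoint h⟩)
  exact ρ.ne_bot hB (h.eq_bot_of_le hle)

theorem sameBlock_isolate (hT : T.Nonempty) :
    SameBlock (isolate ρ T hT) x y ↔ x ∈ T ∧ y ∈ T ∨ x ∉ T ∧ y ∉ T ∧ SameBlock ρ x y := by
  constructor
  · rintro ⟨B, hB, hx, hy⟩
    rcases (mem_parts_isolate hT).mp hB with rfl | ⟨D, hD, -, rfl⟩
    · exact .inl ⟨hx, hy⟩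
    · obtain ⟨hxD, hxT⟩ := mem_sdiff.mp hx
      obtain ⟨hyD, hyT⟩ := mem_sdiff.mp hy
      exact .inr ⟨hxT, hyT, D, hD, hxD, hyD⟩
  · rintro (⟨hx, hy⟩ | ⟨hx, hy, D, hD, hxD, hyD⟩)
    · exact ⟨T, (mem_parts_isolate hT).mpr (.inl rfl), hx, hy⟩
    · exact ⟨D \ T, (mem_parts_isolate hT).mpr (.inr ⟨D, hD, fun h => hx (h hxD), rfl⟩),
        mem_sdiff.mpr ⟨hxD, hx⟩, mem_sdiff.mpr ⟨hyD, hy⟩⟩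

theorem strictlyEmbraces_of_forall_lt {b b' : Fin m} (hb : b ∈ B) (hb' : b' ∈ B)
    (hT : T.Nonempty) (h : ∀ t ∈ T, b < t ∧ t < b') : StrictlyEmbraces B T :=
  ⟨B.min' ⟨b, hb⟩, B.max' ⟨b, hb⟩, T.min' hT, T.max' hT, ⟨min'_mem _ _, B.min'_le⟩,
    ⟨max'_mem _ _, B.le_max'⟩, ⟨min'_mem _ _, T.min'_le⟩, ⟨max'_mem _ _, T.le_max'⟩,
    (B.min'_le b hb).trans_lt (h _ (min'_mem _ _)).1,
    (h _ (max'_mem _ _)).2.trans_le (B.le_max' b' hb')⟩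

theorem isNC_and_isOuter_iff_isIntervalPartition :
    IsNC π ∧ (∀ B ∈ π.parts, IsOuter π B) ↔ IsIntervalPartition π := by
  constructor
  · rintro ⟨hπ, houter⟩ B hB x hx z hz y hxy hyz
    by_contra hy
    obtain ⟨A, hA, hyA⟩ := π.exists_mem (mem_univ y)
    have hne : ∀ a ∈ A, ∀ b ∈ B, a ≠ b := fun a ha b hb hab =>
      hy (π.eq_of_mem_parts hA hB ha (hab ▸ hb) ▸ hyA)
    have hxy : x < y := hxy.lt_of_ne (hne y hyA x hx).symm
    have hyz : y < z := hyz.lt_of_ne (hne y hyA z hz)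
    refine (houter A hA).2 ⟨B, hB, strictlyEmbraces_of_forall_lt hx hz ⟨y, hyA⟩ fun a ha => ?_⟩
    by_contra! hout
    rcases (hne a ha x hx).lt_or_gt with hax | hxa
    · have hcross := hπ a x y z hax hxy hyz ⟨A, hA, ha, hyA⟩ ⟨B, hB, hx, hz⟩
      exact hne x ((sameBlock_iff_mem hA ha).mp hcross) x hx rfl
    · have hza : z < a := (hout hxa).lt_of_ne (hne a ha z hz).symm
      have hcross := hπ x y z a hxy hyz hza ⟨B, hB, hx, hz⟩ ⟨A, hA, hyA, ha⟩
      exact hy ((sameBlock_iff_mem hB hx).mp hcross)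
  · refine fun hπ => ⟨fun i j k l hij hjk _ ⟨B, hB, hi, hk⟩ _ =>
      ⟨B, hB, hi, hπ B hB i hi k hk j hij.le hjk.le⟩, fun A hA => ⟨hA, ?_⟩⟩
    rintro ⟨B, hB, b, b', a, a', hb, hb', ha, ha', hba, hab⟩
    have haB := hπ B hB b hb.1 b' hb'.1 a hba.le ((ha.2 a' ha'.1).trans hab.le)
    exact hba.not_ge (ha.2 b (π.eq_of_mem_parts hA hB ha.1 haB ▸ hb.1))

end Partitions

section Reading

variable {m : ℕ} {π ρ : FP m} {i : Fin m} {A T : Finset (Fin m)} {S R : List (Finset (Fin m))}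

/-- A state in which a non-crossing partition can be when its first `j` positions have been read.
The blocks of `ρ` are the parts of its blocks which have been read, and singletons behind them; the
stack `S`, with the innermost block on top, consists of those blocks which will be continued. -/
structure IsReadingState (j : ℕ) (S : List (Finset (Fin m))) (ρ : FP m) : Prop where
  isNC : IsNC ρ
  eq_of_le : ∀ {x y}, SameBlock ρ x y → j ≤ y.val → x = y
  mem_parts : ∀ {A}, A ∈ S → A ∈ ρ.parts
  lt : ∀ {A a}, A ∈ S → a ∈ A → a.val < j
  visible : ∀ {A a x y}, A ∈ S → a ∈ A → x < a → a < y → SameBlock ρ x y → x ∈ A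
  pairwise : S.Pairwise fun A A' => ∀ a ∈ A, ∀ a' ∈ A', a' < a

/-- `π` is in the state `(S, ρ)` when its first `j` positions have been read. -/
structure IsCompletion (j : ℕ) (S : List (Finset (Fin m))) (ρ π : FP m) : Prop where
  isNC : IsNC π
  sameBlock_iff : ∀ {x y}, x.val < j → y.val < j → (SameBlock π x y ↔ SameBlock ρ x y)
  open_iff : ∀ {x}, x.val < j → ((∃ y : Fin m, j ≤ y.val ∧ SameBlock π x y) ↔ ∃ A ∈ S, x ∈ A)

theorem IsReadingState.close {j : ℕ} (h : IsReadingState j (T :: R) ρ) : IsReadingState j R ρ where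
  isNC := h.isNC
  eq_of_le := h.eq_of_le
  mem_parts hA := h.mem_parts (List.mem_cons_of_mem _ hA)
  lt hA := h.lt (List.mem_cons_of_mem _ hA)
  visible hA := h.visible (List.mem_cons_of_mem _ hA)
  pairwise := h.pairwise.of_cons

theorem IsReadingState.push (h : IsReadingState i S ρ) :
    IsReadingState (i + 1) ({i} :: S) ρ where
  isNC := h.isNC
  eq_of_le hxy hy := h.eq_of_le hxy (by omega)
  mem_parts hA := by
    rcases List.mem_cons.mp hA with rfl | hA
    · obtain ⟨B, hB, hiB⟩ := ρ.exists_mem (mem_univ i)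
      have : B = {i} := eq_singleton_iff_unique_mem.mpr
        ⟨hiB, fun x hx => h.eq_of_le ⟨B, hB, hx, hiB⟩ le_rfl⟩
      rwa [← this]
    · exact h.mem_parts hA
  lt hA ha := by
    rcases List.mem_cons.mp hA with rfl | hA
    · rw [mem_singleton.mp ha]; omega
    · exact (h.lt hA ha).trans (Nat.lt_succ_self _)
  visible hA ha hx hy hxy := by
    rcases List.mem_cons.mp hA with rfl | hA
    · rw [mem_singleton] at ha
      subst ha
      exact absurd (h.eq_of_le hxy hy.le) (hx.trans hy).ne
    · exact h.visible hA ha hx hy hxy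
  pairwise := List.pairwise_cons.mpr ⟨fun A' hA' a ha a' ha' => by
    rw [mem_singleton.mp ha]; exact h.lt hA' ha', h.pairwise⟩

theorem sameBlock_isolate_insert (hA : A ∈ ρ.parts) {x y : Fin m} (hx : x ≠ i) (hy : y ≠ i) :
    SameBlock (isolate ρ (insert i A) (insert_nonempty i A)) x y ↔ SameBlock ρ x y := by
  have hxA : SameBlock ρ x y → (x ∈ A ↔ y ∈ A) := fun h =>
    ⟨fun hx => (sameBlock_iff_mem hA hx).mp h, fun hy => (sameBlock_iff_mem hA hy).mp h.symm⟩
  have hAA : x ∈ A → y ∈ A → SameBlock ρ x y := fun hx hy => ⟨A, hA, hx, hy⟩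
  rw [sameBlock_isolate, mem_insert, mem_insert]
  tauto

theorem sameBlock_isolate_insert_self {x : Fin m} (hx : x ≠ i) :
    SameBlock (isolate ρ (insert i A) (insert_nonempty i A)) x i ↔ x ∈ A := by
  simp [sameBlock_isolate, hx]

theorem IsReadingState.disjoint {j : ℕ} (h : IsReadingState j (T :: R) ρ) (hA : A ∈ R) :
    Disjoint A T :=
  disjoint_left.mpr fun x hxA hxT =>
    ((List.pairwise_cons.mp h.pairwise).1 A hA x hxT x hxA).false

theorem IsReadingState.le_of_mem_insert (h : IsReadingState i (A :: R) ρ) {x : Fin m}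
    (hx : x ∈ insert i A) : x ≤ i :=
  (mem_insert.mp hx).elim le_of_eq fun hx => (h.lt List.mem_cons_self hx).le

theorem IsReadingState.mem_of_mem_insert (h : IsReadingState i (A :: R) ρ) {x y : Fin m}
    (hx : x ∈ insert i A) (hy : y ∈ insert i A) (hxy : x < y) : x ∈ A :=
  mem_of_mem_insert_of_ne hx (hxy.trans_le (h.le_of_mem_insert hy)).ne

theorem IsReadingState.visible_insert (h : IsReadingState i (A :: R) ρ) {a x y : Fin m}
    (ha : a ∈ insert i A) (hxa : x < a) (hay : a < y) (hxy : SameBlock ρ x y) : x ∈ A := by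
  rcases mem_insert.mp ha with rfl | ha
  · exact absurd (h.eq_of_le hxy hay.le) (hxa.trans hay).ne
  · exact h.visible List.mem_cons_self ha hxa hay hxy

theorem IsReadingState.isNC_extend (h : IsReadingState i (A :: R) ρ) :
    IsNC (isolate ρ (insert i A) (insert_nonempty i A)) := by
  intro a b c d hab hbc hcd hac hbd
  rcases (sameBlock_isolate _).mp hac with ⟨ha, hc⟩ | ⟨ha, -, hac'⟩ <;>
    rcases (sameBlock_isolate _).mp hbd with ⟨hb, -⟩ | ⟨hb, -, hbd'⟩
  · exact (sameBlock_isolate _).mpr (.inl ⟨ha, hb⟩)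
  · exact absurd (mem_insert_of_mem (h.visible_insert hc hbc hcd hbd')) hb
  · exact absurd (mem_insert_of_mem (h.visible_insert hb hab hbc hac')) ha
  · exact (sameBlock_isolate _).mpr (.inr ⟨ha, hb, h.isNC a b c d hab hbc hcd hac' hbd'⟩)

theorem IsReadingState.extend (h : IsReadingState i (A :: R) ρ) :
    IsReadingState (i + 1) (insert i A :: R) (isolate ρ (insert i A) (insert_nonempty i A)) where
  isNC := h.isNC_extend
  eq_of_le hxy hy := by
    rcases (sameBlock_isolate _).mp hxy with ⟨-, hyT⟩ | ⟨-, -, hxy⟩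
    · exact absurd (h.le_of_mem_insert hyT) (by omega)
    · exact h.eq_of_le hxy (by omega)
  mem_parts hB := by
    rcases List.mem_cons.mp hB with rfl | hB
    · exact (mem_parts_isolate _).mpr (.inl rfl)
    · refine mem_parts_isolate_of_disjoint _ (h.mem_parts (List.mem_cons_of_mem _ hB)) ?_
      exact disjoint_insert_right.mpr
        ⟨fun hi => (h.lt (List.mem_cons_of_mem _ hB) hi).false, h.disjoint hB⟩
  lt hB hb := by
    rcases List.mem_cons.mp hB with rfl | hB
    · exact Nat.lt_succ_of_le (h.le_of_mem_insert hb)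
    · exact (h.lt (List.mem_cons_of_mem _ hB) hb).trans (Nat.lt_succ_self _)
  visible hB hb hx hy hxy := by
    rcases List.mem_cons.mp hB with rfl | hB <;>
      rcases (sameBlock_isolate _).mp hxy with ⟨hxT, hyT⟩ | ⟨-, -, hxy⟩
    · exact hxT
    · exact mem_insert_of_mem (h.visible_insert hb hx hy hxy)
    · have hxA := h.mem_of_mem_insert hxT hyT (hx.trans hy)
      exact absurd ((List.pairwise_cons.mp h.pairwise).1 _ hB _ hxA _ hb) hx.not_gt
    · exact h.visible (List.mem_cons_of_mem _ hB) hb hx hy hxy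
  pairwise := List.pairwise_cons.mpr ⟨fun A' hA' a ha a' ha' => by
    rcases mem_insert.mp ha with rfl | ha
    · exact h.lt (List.mem_cons_of_mem _ hA') ha'
    · exact (List.pairwise_cons.mp h.pairwise).1 A' hA' a ha a' ha', h.pairwise.of_cons⟩

/-- The completions of a state in which the block `T` of the position `i` may or may not be
closed at `i`. -/
theorem isCompletion_or_isCompletion_iff (h : IsReadingState (i + 1) (T :: R) ρ) (hi : i ∈ T) :
    IsCompletion (i + 1) (T :: R) ρ π ∨ IsCompletion (i + 1) R ρ π ↔
      IsNC π ∧ (∀ x ≤ i, ∀ y ≤ i, SameBlock π x y ↔ SameBlock ρ x y) ∧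
        ∀ x ≤ i, x ∉ T → ((∃ y, i < y ∧ SameBlock π x y) ↔ ∃ A ∈ R, x ∈ A) := by
  have hT := h.mem_parts List.mem_cons_self
  constructor
  · rintro (hπ | hπ)
    · exact ⟨hπ.isNC, fun x hx y hy => hπ.sameBlock_iff (by omega) (by omega), fun x hx hxT => by
        simpa [hxT] using hπ.open_iff (x := x) (by omega)⟩
    · exact ⟨hπ.isNC, fun x hx y hy => hπ.sameBlock_iff (by omega) (by omega), fun _ _ _ =>
        hπ.open_iff (by omega)⟩
  · rintro ⟨hNC, hsame, hopen⟩
    have hmem : ∀ x ∈ T, SameBlock π x i := fun x hx => by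
      have hxi : x ≤ i := Nat.lt_succ_iff.mp (h.lt List.mem_cons_self hx)
      exact (hsame x hxi i le_rfl).mpr ⟨T, hT, hx, hi⟩
    by_cases hlater : ∃ y, i < y ∧ SameBlock π i y
    · obtain ⟨y, hy, hiy⟩ := hlater
      refine .inl ⟨hNC, fun hx hy => hsame _ (by omega) _ (by omega), fun {x} hx => ?_⟩
      by_cases hxT : x ∈ T
      · exact iff_of_true ⟨y, hy, (hmem x hxT).trans hiy⟩ ⟨T, List.mem_cons_self, hxT⟩
      · simpa [hxT] using hopen x (by omega) hxT
    · refine .inr ⟨hNC, fun hx hy => hsame _ (by omega) _ (by omega), fun {x} hx => ?_⟩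
      by_cases hxT : x ∈ T
      · refine iff_of_false (fun ⟨y, hy, hxy⟩ => hlater ⟨y, hy, (hmem x hxT).symm.trans hxy⟩) ?_
        rintro ⟨A, hA, hxA⟩
        exact disjoint_left.mp (h.disjoint hA) hxA hxT
      · exact hopen x (by omega) hxT

theorem exists_le_sameBlock_iff {x : Fin m} (hx : ¬ SameBlock π x i) :
    (∃ y : Fin m, i.val ≤ y.val ∧ SameBlock π x y) ↔ ∃ y, i < y ∧ SameBlock π x y :=
  exists_congr fun y => and_congr_left fun hxy =>
    ⟨fun hy => hy.lt_of_ne fun hiy => hx (by rwa [Fin.ext hiy]), fun hy => hy.le⟩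

theorem IsReadingState.isCompletion_push_iff (h : IsReadingState i S ρ) :
    IsCompletion (i + 1) ({i} :: S) ρ π ∨ IsCompletion (i + 1) S ρ π ↔
      IsCompletion i S ρ π ∧ ∀ x < i, ¬ SameBlock π x i := by
  rw [isCompletion_or_isCompletion_iff h.push (mem_singleton_self i)]
  constructor
  · rintro ⟨hNC, hsame, hopen⟩
    have hi : ∀ x < i, ¬ SameBlock π x i := fun x hx hxi =>
      hx.ne (h.eq_of_le ((hsame x hx.le i le_rfl).mp hxi) le_rfl)
    refine ⟨⟨hNC, fun hx hy => hsame _ (by omega) _ (by omega), fun {x} hx => ?_⟩, hi⟩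
    rw [exists_le_sameBlock_iff (hi x hx)]
    exact hopen x (by omega) (mt mem_singleton.mp (Fin.ne_of_lt hx))
  · rintro ⟨hπ, hi⟩
    have hρ : ∀ x < i, ¬ SameBlock ρ x i := fun x hx hxi => hx.ne (h.eq_of_le hxi le_rfl)
    refine ⟨hπ.isNC, fun x hx y hy => ?_, fun x hx hxi => ?_⟩
    · rcases hx.eq_or_lt with rfl | hx <;> rcases hy.eq_or_lt with rfl | hy
      · exact iff_of_true (sameBlock_self _) (sameBlock_self _)
      · exact iff_of_false (fun h => hi y hy h.symm) fun h => hρ y hy h.symm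
      · exact iff_of_false (hi x hx) (hρ x hx)
      · exact hπ.sameBlock_iff hx hy
    · have hx : x < i := hx.lt_of_ne (mt mem_singleton.mpr hxi)
      rw [← exists_le_sameBlock_iff (hi x hx)]
      exact hπ.open_iff hx

/-- By non-crossingness, a block which continues at `i` can only be the innermost open one. -/
theorem IsReadingState.mem_of_sameBlock (h : IsReadingState i (A :: R) ρ)
    (hπ : IsCompletion i (A :: R) ρ π) {x : Fin m} (hx : x < i) (hxi : SameBlock π x i) :
    x ∈ A := by
  obtain ⟨B, hB, hxB⟩ := (hπ.open_iff hx).mp ⟨i, le_rfl, hxi⟩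
  rcases List.mem_cons.mp hB with rfl | hB
  · exact hxB
  have hA := h.mem_parts List.mem_cons_self
  obtain ⟨a, ha⟩ := ρ.nonempty_of_mem_parts hA
  have hai : a < i := h.lt List.mem_cons_self ha
  have hxa : x < a := (List.pairwise_cons.mp h.pairwise).1 B hB a ha x hxB
  have hsame : SameBlock π x a := by
    obtain ⟨y, hy, hay⟩ := (hπ.open_iff hai).mpr ⟨A, List.mem_cons_self, ha⟩
    rcases hy.eq_or_lt with hiy | hiy
    · exact hxi.trans (Fin.ext hiy ▸ hay.symm)
    · exact hπ.isNC x a i y hxa hai hiy hxi hay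
  exact (sameBlock_iff_mem hA ha).mp ((hπ.sameBlock_iff hx hai).mp hsame).symm

theorem IsReadingState.sameBlock_iff_mem_of_isCompletion (h : IsReadingState i (A :: R) ρ)
    (hπ : IsCompletion i (A :: R) ρ π) {z : Fin m} (hz : z < i) (hzi : SameBlock π z i)
    {x : Fin m} (hx : x < i) : SameBlock π x i ↔ x ∈ A := by
  refine ⟨h.mem_of_sameBlock hπ hx, fun hxA => ?_⟩
  have hxz : SameBlock ρ x z :=
    ⟨A, h.mem_parts List.mem_cons_self, hxA, h.mem_of_sameBlock hπ hz hzi⟩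
  exact ((hπ.sameBlock_iff hx hz).mpr hxz).trans hzi

theorem IsReadingState.isCompletion_extend_iff (h : IsReadingState i (A :: R) ρ) :
    IsCompletion (i + 1) (insert i A :: R) (isolate ρ (insert i A) (insert_nonempty i A)) π ∨
        IsCompletion (i + 1) R (isolate ρ (insert i A) (insert_nonempty i A)) π ↔
      IsCompletion i (A :: R) ρ π ∧ ∃ x < i, SameBlock π x i := by
  rw [isCompletion_or_isCompletion_iff h.extend (mem_insert_self i A)]
  have hA := h.mem_parts List.mem_cons_self
  have hρ : ∀ x < i, ∀ y < i,
      (SameBlock (isolate ρ (insert i A) (insert_nonempty i A)) x y ↔ SameBlock ρ x y) :=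
    fun x hx y hy => sameBlock_isolate_insert hA hx.ne hy.ne
  constructor
  · rintro ⟨hNC, hsame, hopen⟩
    have hi : ∀ x < i, (SameBlock π x i ↔ x ∈ A) := fun x hx =>
      (hsame x hx.le i le_rfl).trans (sameBlock_isolate_insert_self hx.ne)
    obtain ⟨a, ha⟩ := ρ.nonempty_of_mem_parts hA
    have hai := h.lt List.mem_cons_self ha
    refine ⟨⟨hNC, fun {x y} hx hy => (hsame x (Fin.le_of_lt hx) y (Fin.le_of_lt hy)).trans
      (hρ x hx y hy), fun {x} hx => ?_⟩, a, hai, (hi a hai).mpr ha⟩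
    by_cases hxA : x ∈ A
    · exact iff_of_true ⟨i, le_rfl, (hi x hx).mpr hxA⟩ ⟨A, List.mem_cons_self, hxA⟩
    · rw [exists_le_sameBlock_iff (mt (hi x hx).mp hxA),
        hopen x (Fin.le_of_lt hx) (by simp [hxA, Fin.ne_of_lt hx])]
      simp [hxA]
  · rintro ⟨hπ, z, hz, hzi⟩
    have hi : ∀ x < i, (SameBlock π x i ↔ x ∈ A) := fun x hx =>
      h.sameBlock_iff_mem_of_isCompletion hπ hz hzi hx
    have hi' : ∀ x < i, (SameBlock π x i ↔
        SameBlock (isolate ρ (insert i A) (insert_nonempty i A)) x i) := fun x hx =>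
      (hi x hx).trans (sameBlock_isolate_insert_self hx.ne).symm
    refine ⟨hπ.isNC, fun x hx y hy => ?_, fun x hx hxi => ?_⟩
    · rcases hx.eq_or_lt with rfl | hx <;> rcases hy.eq_or_lt with rfl | hy
      · exact iff_of_true (sameBlock_self _) (sameBlock_self _)
      · exact ⟨fun h => ((hi' y hy).mp h.symm).symm, fun h => ((hi' y hy).mpr h.symm).symm⟩
      · exact hi' x hx
      · exact (hπ.sameBlock_iff hx hy).trans (hρ x hx y hy).symm
    · obtain ⟨hxi, hxA⟩ := not_or.mp (mt mem_insert.mpr hxi)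
      have hx : x < i := hx.lt_of_ne hxi
      rw [← exists_le_sameBlock_iff (mt (hi x hx).mp hxA), hπ.open_iff hx]
      simp [hxA]

end Reading

section Sum

variable {α : Type*} {m : ℕ} {π ρ : FP m} {i : Fin m} {A B T : Finset (Fin m)}
  {R S : List (Finset (Fin m))} {ε : ℂ} {L : List α → ℂ} {w : Fin m → α}

/-- The subword of `w` in the positions belonging to `B`. -/
noncomputable def subword (w : Fin m → α) (B : Finset (Fin m)) : List α :=
  (B.sort (· ≤ ·)).map w

theorem subword_singleton (w : Fin m → α) (i : Fin m) : subword w {i} = [w i] := by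
  simp [subword]

theorem subword_insert (w : Fin m → α) (h : ∀ a ∈ A, a < i) :
    subword w (insert i A) = subword w A ++ [w i] := by
  have hsort : (insert i A).sort (· ≤ ·) = A.sort (· ≤ ·) ++ [i] := by
    refine List.Perm.eq_of_pairwise' (r := (· ≤ ·)) (pairwise_sort _ _) ?_ ?_
    · exact List.pairwise_append.mpr ⟨pairwise_sort _ _, List.pairwise_singleton _ _,
        fun a ha b hb => by
          rw [List.mem_singleton.mp hb]; exact (h a ((mem_sort _).mp ha)).le⟩
    · refine (List.perm_ext_iff_of_nodup (sort_nodup _ _) ?_).mpr fun x => ?_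
      · exact List.nodup_append.mpr ⟨sort_nodup _ _, List.nodup_singleton _, fun a ha b hb => by
          rw [List.mem_singleton.mp hb]; exact (h a ((mem_sort _).mp ha)).ne⟩
      · simp [or_comm]
  rw [subword, hsort, List.map_append, List.map_singleton, subword]

/-- The contribution of the block `B` of `π`, whose cumulant gets the weight `ε` if it is inner. -/
noncomputable def blockWeight (ε : ℂ) (L : List α → ℂ) (w : Fin m → α) (π : FP m)
    (B : Finset (Fin m)) : ℂ :=
  (if IsOuter π B then 1 else ε) * L (subword w B)

/-- The contribution of those blocks of `π` which are not yet closed at the position `j`. -/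
noncomputable def pendingWeight (ε : ℂ) (L : List α → ℂ) (w : Fin m → α) (j : ℕ) (π : FP m) : ℂ :=
  ∏ B ∈ π.parts with ∃ x ∈ B, j ≤ x.val, blockWeight ε L w π B

theorem pendingWeight_eq_of_sameBlock {y : Fin m} (hy : i < y) (hiy : SameBlock π i y) :
    pendingWeight ε L w i π = pendingWeight ε L w (i + 1) π := by
  refine prod_congr (filter_congr fun B hB => ⟨?_, ?_⟩) fun _ _ => rfl
  · rintro ⟨x, hx, hix⟩
    rcases hix.eq_or_lt with hix | hix
    · rw [← Fin.ext hix] at hx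
      exact ⟨y, (sameBlock_iff_mem hB hx).mp hiy, hy⟩
    · exact ⟨x, hx, hix⟩
  · exact fun ⟨x, hx, hix⟩ => ⟨x, hx, by omega⟩

theorem pendingWeight_eq_mul (hT : T ∈ π.parts) (hi : i ∈ T) (hle : ∀ x ∈ T, x ≤ i) :
    pendingWeight ε L w i π = blockWeight ε L w π T * pendingWeight ε L w (i + 1) π := by
  have hnot : T ∉ π.parts.filter fun B => ∃ x ∈ B, i.val + 1 ≤ x.val := fun h => by
    obtain ⟨x, hx, hix⟩ := (mem_filter.mp h).2
    exact absurd (hle x hx) (not_le.mpr hix)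
  rw [pendingWeight, pendingWeight, ← prod_insert hnot]
  refine prod_congr (Finset.ext fun B => ?_) fun _ _ => rfl
  rw [mem_insert, mem_filter, mem_filter]
  constructor
  · rintro ⟨hB, x, hx, hix⟩
    rcases hix.eq_or_lt with hix | hix
    · rw [← Fin.ext hix] at hx
      exact .inl (π.eq_of_mem_parts hB hT hx hi)
    · exact .inr ⟨hB, x, hx, hix⟩
  · rintro (rfl | ⟨hB, x, hx, hix⟩)
    · exact ⟨hT, i, hi, le_rfl⟩
    · exact ⟨hB, x, hx, by omega⟩

theorem IsReadingState.mem_parts_of_isCompletion (h : IsReadingState (i + 1) (T :: R) ρ)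
    (hi : i ∈ T) (hπ : IsCompletion (i + 1) R ρ π) : T ∈ π.parts := by
  have hT := h.mem_parts List.mem_cons_self
  obtain ⟨B, hB, hiB⟩ := π.exists_mem (mem_univ i)
  suffices hBT : B = T from hBT ▸ hB
  ext x
  rw [← sameBlock_iff_mem hB hiB, ← sameBlock_iff_mem hT hi]
  rcases le_or_gt (i.val + 1) x.val with hx | hx
  · refine iff_of_false (fun hix => ?_) fun hix => ?_
    · obtain ⟨A, hA, hiA⟩ := (hπ.open_iff (Nat.lt_succ_self _)).mp ⟨x, hx, hix⟩
      exact disjoint_left.mp (h.disjoint hA) hiA hi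
    · exact absurd (h.lt List.mem_cons_self ((sameBlock_iff_mem hT hi).mp hix)) (by omega)
  · exact hπ.sameBlock_iff (Nat.lt_succ_self _) hx

theorem IsReadingState.isOuter_iff (h : IsReadingState (i + 1) (T :: R) ρ) (hi : i ∈ T)
    (hπ : IsCompletion (i + 1) R ρ π) : IsOuter π T ↔ R = [] := by
  have hT := h.mem_parts_of_isCompletion hi hπ
  constructor
  · rintro ⟨-, hout⟩
    refine List.eq_nil_iff_forall_not_mem.mpr fun A hA => hout ?_
    obtain ⟨a, ha⟩ := ρ.nonempty_of_mem_parts (h.mem_parts (List.mem_cons_of_mem _ hA))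
    obtain ⟨y, hy, B, hB, haB, hyB⟩ :=
      (hπ.open_iff (h.lt (List.mem_cons_of_mem _ hA) ha)).mpr ⟨A, hA, ha⟩
    refine ⟨B, hB, strictlyEmbraces_of_forall_lt haB hyB ⟨i, hi⟩ fun x hx =>
      ⟨(List.pairwise_cons.mp h.pairwise).1 A hA x hx a ha, ?_⟩⟩
    exact (h.lt List.mem_cons_self hx).trans_le hy
  · rintro rfl
    refine ⟨hT, fun ⟨B, hB, b, b', t, t', hb, hb', ht, ht', hbt, htb⟩ => ?_⟩
    have hbi := hbt.trans_le (ht.2 i hi)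
    have hib := (ht'.2 i hi).trans_lt htb
    simpa using (hπ.open_iff (x := b) (by omega)).mp ⟨b', hib, B, hB, hb.1, hb'.1⟩

/-- The sum of the contributions of the completions of a state. -/
noncomputable def completionSum (ε : ℂ) (L : List α → ℂ) (w : Fin m → α) (j : ℕ)
    (S : List (Finset (Fin m))) (ρ : FP m) : ℂ :=
  ∑ π with IsCompletion j S ρ π, pendingWeight ε L w j π

theorem sum_pendingWeight_eq_openOrClose (h : IsReadingState (i + 1) (T :: R) ρ) (hi : i ∈ T)
    {F : List (List α) → ℂ}
    (hopen : completionSum ε L w (i + 1) (T :: R) ρ = F ((T :: R).map (subword w)))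
    (hclose : completionSum ε L w (i + 1) R ρ = F (R.map (subword w))) :
    ∑ π with IsCompletion (i + 1) (T :: R) ρ π ∨ IsCompletion (i + 1) R ρ π,
        pendingWeight ε L w i π =
      openOrClose ε L F (subword w T) (R.map (subword w)) := by
  have hdisj : Disjoint (univ.filter fun π => IsCompletion (i + 1) (T :: R) ρ π)
      (univ.filter fun π => IsCompletion (i + 1) R ρ π) := by
    refine disjoint_filter.mpr fun π _ hπ hπ' => ?_
    obtain ⟨A, hA, hiA⟩ := (hπ'.open_iff (Nat.lt_succ_self _)).mp
      ((hπ.open_iff (Nat.lt_succ_self _)).mpr ⟨T, List.mem_cons_self, hi⟩)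
    exact disjoint_left.mp (h.disjoint hA) hiA hi
  rw [filter_or, sum_union hdisj, openOrClose, ← List.map_cons, ← hopen, ← hclose,
    completionSum, completionSum, mul_sum]
  congr 1 <;> refine sum_congr rfl fun π hπ => ?_
  · obtain ⟨y, hy, hiy⟩ := ((mem_filter.mp hπ).2.open_iff (Nat.lt_succ_self _)).mpr
      ⟨T, List.mem_cons_self, hi⟩
    exact pendingWeight_eq_of_sameBlock hy hiy
  · have hπ := (mem_filter.mp hπ).2
    rw [pendingWeight_eq_mul (h.mem_parts_of_isCompletion hi hπ) hi fun x hx =>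
      Nat.lt_succ_iff.mp (h.lt List.mem_cons_self hx), blockWeight]
    simp only [h.isOuter_iff hi hπ]
    cases R <;> simp [closeCoeff]

theorem completionSum_eq_of_le {j : ℕ} (h : IsReadingState j S ρ) (hj : m ≤ j) :
    completionSum ε L w j S ρ = fockMoment ε L [] (S.map (subword w)) := by
  have hlt : ∀ x : Fin m, x.val < j := fun x => x.isLt.trans_le hj
  cases S with
  | nil =>
    have hcompl : ∀ π, IsCompletion j [] ρ π ↔ π = ρ := fun π => by
      refine ⟨fun hπ => eq_of_sameBlock_iff fun x y => hπ.sameBlock_iff (hlt x) (hlt y), ?_⟩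
      rintro rfl
      exact ⟨h.isNC, fun _ _ => Iff.rfl, fun {x} _ =>
        iff_of_false (fun ⟨y, hy, _⟩ => hy.not_gt (hlt y)) (by simp)⟩
    simp only [completionSum, hcompl, filter_eq', mem_univ, if_true, sum_singleton, pendingWeight]
    rw [filter_false_of_mem fun B _ ⟨x, _, hx⟩ => hx.not_gt (hlt x)]
    simp [fockMoment]
  | cons A R =>
    obtain ⟨a, ha⟩ := ρ.nonempty_of_mem_parts (h.mem_parts List.mem_cons_self)
    rw [completionSum, filter_false_of_mem fun π _ hπ => ?_]
    · rfl
    · obtain ⟨y, hy, -⟩ := (hπ.open_iff (hlt a)).mpr ⟨A, List.mem_cons_self, ha⟩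
      exact hy.not_gt (hlt y)

theorem sum_push_eq_openOrClose (h : IsReadingState i S ρ) {F : List (List α) → ℂ}
    (hF : ∀ S ρ, IsReadingState (i + 1) S ρ →
      completionSum ε L w (i + 1) S ρ = F (S.map (subword w))) :
    ∑ π with IsCompletion i S ρ π ∧ ∀ x < i, ¬ SameBlock π x i, pendingWeight ε L w i π =
      openOrClose ε L F [w i] (S.map (subword w)) := by
  simp only [← h.isCompletion_push_iff, ← subword_singleton w i]
  exact sum_pendingWeight_eq_openOrClose h.push (mem_singleton_self i) (hF _ _ h.push)
    (hF _ _ h.push.close)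

theorem sum_extend_eq_openOrClose (h : IsReadingState i (A :: R) ρ) {F : List (List α) → ℂ}
    (hF : ∀ S ρ, IsReadingState (i + 1) S ρ →
      completionSum ε L w (i + 1) S ρ = F (S.map (subword w))) :
    ∑ π with IsCompletion i (A :: R) ρ π ∧ ∃ x < i, SameBlock π x i, pendingWeight ε L w i π =
      openOrClose ε L F (subword w A ++ [w i]) (R.map (subword w)) := by
  simp only [← h.isCompletion_extend_iff,
    ← subword_insert w fun _ ha => h.lt (List.mem_cons_self (a := A)) ha]
  exact sum_pendingWeight_eq_openOrClose h.extend (mem_insert_self i A) (hF _ _ h.extend)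
    (hF _ _ h.extend.close)

theorem completionSum_eq_fockMoment (l : List α) {j : ℕ} (hl : (List.ofFn w).drop j = l)
    (h : IsReadingState j S ρ) :
    completionSum ε L w j S ρ = fockMoment ε L l (S.map (subword w)) := by
  induction l generalizing j S ρ with
  | nil => exact completionSum_eq_of_le h (by simpa using hl)
  | cons x l ih =>
    have hj : j < m := by
      by_contra! hmj
      exact List.cons_ne_nil x l (hl ▸ List.drop_eq_nil_of_le (by simpa using hmj))
    lift j to Fin m using hj with i
    rw [List.drop_eq_getElem_cons (by simp), List.getElem_ofFn, List.cons.injEq] at hl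
    obtain ⟨rfl, hl⟩ := hl
    have ih := fun S ρ => ih (S := S) (ρ := ρ) hl
    have hpush := sum_push_eq_openOrClose h ih
    cases S with
    | nil =>
      refine Eq.trans (sum_congr (filter_congr fun π _ => ?_) fun _ _ => rfl) hpush
      refine (and_iff_left_of_imp fun hπ x hx hxi => ?_).symm
      simpa using (hπ.open_iff hx).mp ⟨i, le_rfl, hxi⟩
    | cons A R =>
      rw [List.map_cons, fockMoment, ← List.map_cons (f := subword w), ← hpush,
        ← sum_extend_eq_openOrClose h ih, completionSum,
        ← sum_filter_add_sum_filter_not _ fun π => ∀ x < i, ¬ SameBlock π x i]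
      simp only [filter_filter, not_forall, not_not, exists_prop]

theorem isReadingState_bot : IsReadingState 0 [] (⊥ : FP m) := by
  have hbot : ∀ {x y : Fin m}, SameBlock ⊥ x y → x = y := by
    rintro x y ⟨B, hB, hx, hy⟩
    obtain ⟨z, -, rfl⟩ := Finpartition.mem_bot_iff.mp hB
    rw [mem_singleton.mp hx, mem_singleton.mp hy]
  exact ⟨fun a b c d hab hbc _ hac _ => absurd (hbot hac) (hab.trans hbc).ne, fun h _ => hbot h,
    by simp, by simp, by simp, List.Pairwise.nil⟩

theorem sum_blockWeight_eq_fockMoment (ε : ℂ) (L : List α → ℂ) (w : Fin m → α) :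
    ∑ π : FP m with IsNC π, ∏ B ∈ π.parts, blockWeight ε L w π B =
      fockMoment ε L (List.ofFn w) [] := by
  refine Eq.trans ?_ (completionSum_eq_fockMoment (List.ofFn w) rfl isReadingState_bot)
  refine sum_congr (filter_congr fun π _ => ?_) fun π _ => ?_
  · exact ⟨fun hπ => ⟨hπ, by simp, by simp⟩, fun hπ => hπ.isNC⟩
  · rw [pendingWeight, filter_true_of_mem fun B hB => ?_]
    obtain ⟨x, hx⟩ := π.nonempty_of_mem_parts hB
    exact ⟨x, hx, Nat.zero_le _⟩

end Sum

section Cumulants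

variable {k : ℕ} {ε : ℂ} {μ ν : Dist k} {L : List (Fin k) → ℂ}

/-- The series whose coefficients are the values of `L` on nonempty words. -/
def wordSeries (L : List (Fin k) → ℂ) : NCSeries k := fun _ w => L (List.ofFn w)

theorem exists_wordSeries_eq (f : NCSeries k) : ∃ L, wordSeries L = f := by
  let toList : (Σ n, Fin (n + 1) → Fin k) → List (Fin k) := fun w => List.ofFn w.2
  have hinj : toList.Injective := by
    rintro ⟨n, v⟩ ⟨n', w⟩ h
    obtain ⟨hn, hvw⟩ := Sigma.mk.inj (List.ofFn_inj'.mp h)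
    obtain rfl := Nat.succ.inj hn
    exact congrArg (Sigma.mk n) (eq_of_heq hvw)
  exact ⟨Function.extend toList (fun w => f w.1 w.2) 0,
    funext₂ fun n w => hinj.extend_apply _ _ ⟨n, w⟩⟩

theorem partCoeff_wordSeries {m : ℕ} (w : Fin (m + 1) → Fin k) {B : Finset (Fin (m + 1))}
    (hB : B.Nonempty) : partCoeff (wordSeries L) w B = L (subword w B) := by
  rw [partCoeff, dif_pos hB, wordSeries, subword]
  refine congrArg L (List.ext_getElem ?_ fun i _ _ => ?_)
  · have := hB.card_pos
    simp only [List.length_ofFn, List.length_map, length_sort]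
    omega
  · simp only [List.getElem_ofFn, List.getElem_map, coe_orderIsoOfFin_apply, orderEmbOfFin_apply]
    rfl

/-- The function `L` on nonempty words is the family of free cumulants of `μ` if `ε = 1`, and the
family of Boolean cumulants of `μ` if `ε = 0`. -/
def HasCumulants (ε : ℂ) (μ : Dist k) (L : List (Fin k) → ℂ) : Prop :=
  ∀ w ≠ [], wordMoment μ w = fockMoment ε L w []

theorem HasCumulants.wordMoment_eq (h : HasCumulants ε μ L) (hμ : IsDalg μ) (w : List (Fin k)) :
    wordMoment μ w = fockMoment ε L w [] := by
  cases w with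
  | nil => exact hμ
  | cons x w => exact h _ (List.cons_ne_nil x w)

theorem hasCumulants_iff_momentSeries :
    HasCumulants ε μ L ↔ ∀ n (w : Fin (n + 1) → Fin k), momentSeries μ n w =
      ∑ π : FP (n + 1) with IsNC π, ∏ B ∈ π.parts, blockWeight ε L w π B := by
  simp only [sum_blockWeight_eq_fockMoment, momentSeries_eq_wordMoment]
  refine ⟨fun h n w => h _ (by simp), fun h w hw => ?_⟩
  obtain ⟨x, w, rfl⟩ := List.exists_cons_of_ne_nil hw
  simpa only [List.ofFn_get] using h w.length (x :: w).get

theorem genCoeff_wordSeries {m : ℕ} (w : Fin (m + 1) → Fin k) (π : FP (m + 1)) :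
    genCoeff (wordSeries L) w π = ∏ B ∈ π.parts, L (subword w B) :=
  prod_congr rfl fun _ hB => partCoeff_wordSeries w (π.nonempty_of_mem_parts hB)

theorem isRTransform_wordSeries_iff : IsRTransform μ (wordSeries L) ↔ HasCumulants 1 μ L := by
  rw [hasCumulants_iff_momentSeries, IsRTransform]
  simp only [← sum_filter, genCoeff_wordSeries, blockWeight, ite_self, one_mul]

theorem isEtaSeries_wordSeries_iff : IsEtaSeries μ (wordSeries L) ↔ HasCumulants 0 μ L := by
  have hprod : ∀ {n : ℕ} (w : Fin (n + 1) → Fin k) (π : FP (n + 1)),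
      ∏ B ∈ π.parts, blockWeight 0 L w π B =
        if ∀ B ∈ π.parts, IsOuter π B then genCoeff (wordSeries L) w π else 0 := fun w π => by
    simp only [blockWeight, ite_mul, one_mul, zero_mul, genCoeff_wordSeries, prod_ite_zero]
    congr
  rw [hasCumulants_iff_momentSeries, IsEtaSeries]
  simp only [hprod, ← sum_filter, filter_filter, isNC_and_isOuter_iff_isIntervalPartition]

/-- `ν` is the `p`-fold convolution power of `μ`, the free one if `ε = 1` and the Boolean one if
`ε = 0`. -/
def IsConvPower (ε : ℂ) (p : ℕ) (μ ν : Dist k) : Prop :=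
  ∃ L, HasCumulants ε μ L ∧ HasCumulants ε ν fun u => p * L u

theorem isNFoldFree_iff {p : ℕ} : IsNFoldFree p μ ν ↔ IsConvPower 1 p μ ν := by
  simp only [IsNFoldFree, IsConvPower, ← isRTransform_wordSeries_iff]
  exact Function.Surjective.exists exists_wordSeries_eq

theorem isNFoldBool_iff {p : ℕ} : IsNFoldBool p μ ν ↔ IsConvPower 0 p μ ν := by
  simp only [IsNFoldBool, IsConvPower, ← isEtaSeries_wordSeries_iff]
  exact Function.Surjective.exists exists_wordSeries_eq

theorem isBP_of_hasCumulants (hμ : HasCumulants 0 μ L) (hν : HasCumulants 1 ν L) : IsBP μ ν :=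
  ⟨wordSeries L, isEtaSeries_wordSeries_iff.mpr hμ, isRTransform_wordSeries_iff.mpr hν⟩

end Cumulants

/-! ### Limits of convolution powers -/

theorem isConditionallyPositive_of_posSemidef {α : Type*} {M : List α → ℂ}
    (hM : (wordKernel M).PosSemidef) : IsConditionallyPositive M where
  posSemidef := hM.submatrix _
  star_apply w _ := star_apply_of_posSemidef_wordKernel hM w

theorem IsConditionallyPositive.const_mul {α : Type*} {L : List α → ℂ}
    (hL : IsConditionallyPositive L) {c : ℂ} (hc : 0 ≤ c) :
    IsConditionallyPositive fun u => c * L u where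
  posSemidef := hL.posSemidef.smul hc
  star_apply u hu := by
    rw [star_mul', hL.star_apply u hu, (IsSelfAdjoint.of_nonneg hc).star_eq]

theorem IsConditionallyPositive.of_tendsto {α ι : Type*} {l : Filter ι} [l.NeBot]
    {L : ι → List α → ℂ} {Λ : List α → ℂ} (hL : ∀ i, IsConditionallyPositive (L i))
    (hlim : ∀ u ≠ [], Tendsto (L · u) l (𝓝 (Λ u))) : IsConditionallyPositive Λ where
  posSemidef := posSemidef_of_tendsto (fun i => (hL i).posSemidef) fun u v =>
    hlim _ (by simp [u.2])
  star_apply u hu := tendsto_nhds_unique (hlim u hu).star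
    ((hlim u.reverse (by simpa using hu)).congr fun i => ((hL i).star_apply u hu).symm)

section ConvPower

variable {k : ℕ} {ε ε' : ℂ} {μ ν : Dist k} {Λ : List (Fin k) → ℂ} {μseq νseq : ℕ → Dist k}
  {p : ℕ → ℕ}

theorem eq_of_wordMoment_eq (h : wordMoment μ = wordMoment ν) : μ = ν := by
  have hconv : ConvInMoments (fun _ => μ) ν :=
    convInMoments_iff_wordMoment.mpr fun w => by rw [h]; exact tendsto_const_nhds
  exact LinearMap.ext fun P => tendsto_nhds_unique tendsto_const_nhds (hconv P)

theorem HasCumulants.exists_norm_le (hε : IsIdempotentElem ε) (hε1 : ‖ε‖ ≤ 1) (hμ : IsDc μ)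
    (h : HasCumulants ε μ Λ) : ∃ D : ℝ, 0 ≤ D ∧ ∀ u ≠ [], ‖Λ u‖ ≤ D ^ u.length := by
  obtain ⟨C, hC, hbound⟩ := exists_norm_wordMoment_le hμ
  exact ⟨12 * C, by positivity, fun u hu => norm_le_of_norm_fockMoment_le hε hε1 hC
    (fun w => h.wordMoment_eq hμ.1 w ▸ hbound w) hu⟩

theorem IsConditionallyPositive.exists_isDc (hΛ : IsConditionallyPositive Λ)
    (hε : IsIdempotentElem ε) (hε' : star ε = ε) (hε1 : ‖ε‖ ≤ 1) {D : ℝ} (hD : 0 ≤ D)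
    (hbound : ∀ u ≠ [], ‖Λ u‖ ≤ D ^ u.length) :
    ∃ μ : Dist k, IsDc μ ∧ wordMoment μ = fun w => fockMoment ε Λ w [] :=
  BBP.exists_isDc rfl (hΛ.posSemidef_wordKernel_fockMoment hε hε')
    (by positivity : 0 ≤ 4 * D) fun w => by
      simpa using norm_fockMoment_le hε1 hD hbound w []

theorem IsConditionallyPositive.isInfDiv (hΛ : IsConditionallyPositive Λ) (h : HasCumulants 1 ν Λ)
    (hν : IsDc ν) : IsInfDiv ν := by
  obtain ⟨D, hD, hbound⟩ := h.exists_norm_le IsIdempotentElem.one (by simp) hν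
  refine ⟨hν, fun N hN => ?_⟩
  have hN' : (N : ℂ) ≠ 0 := Nat.cast_ne_zero.mpr hN.ne'
  obtain ⟨ρ, hρ, hρΛ⟩ := (hΛ.const_mul (c := (N : ℂ)⁻¹) (by positivity)).exists_isDc (k := k)
    IsIdempotentElem.one (star_one ℂ) (by simp) hD fun u hu => by
      rw [norm_mul, norm_inv, Complex.norm_natCast]
      exact (mul_le_of_le_one_left (norm_nonneg _)
        (inv_le_one_of_one_le₀ (Nat.one_le_cast.mpr hN))).trans (hbound u hu)
  exact ⟨ρ, hρ, isNFoldFree_iff.mpr ⟨_, fun w _ => congrFun hρΛ w, by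
    simpa only [mul_inv_cancel_left₀ hN'] using h⟩⟩

theorem exists_tendsto_mul_wordMoment (hε : IsIdempotentElem ε) (hp : Tendsto p atTop atTop)
    (hνseq : ∀ N, IsDalg (νseq N)) (hpow : ∀ N, IsConvPower ε (p N) (μseq N) (νseq N))
    (hν : ConvInMoments νseq ν) :
    ∃ Λ, HasCumulants ε ν Λ ∧
      ∀ w ≠ [], Tendsto (fun N => (p N : ℂ) * wordMoment (μseq N) w) atTop (𝓝 (Λ w)) := by
  choose L hL hpL using hpow
  rw [convInMoments_iff_wordMoment] at hν
  simp only [fun N => (hpL N).wordMoment_eq (hνseq N)] at hν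
  choose! Λ hΛ using fun u => exists_tendsto_of_fockMoment hε (fun w => ⟨_, hν w⟩) (u := u)
  refine ⟨Λ, fun w _ => tendsto_nhds_unique (hν w) (tendsto_fockMoment hΛ w []), fun w hw => ?_⟩
  simp only [hL _ w hw]
  exact tendsto_mul_fockMoment hε (tendsto_natCast_atTop_cobounded.comp hp) hΛ hw

theorem tendsto_wordMoment_of_isConvPower (hε : IsIdempotentElem ε) (hp : Tendsto p atTop atTop)
    (hνseq : ∀ N, IsDalg (νseq N)) (hpow : ∀ N, IsConvPower ε (p N) (μseq N) (νseq N))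
    (hΛ : ∀ w ≠ [], Tendsto (fun N => (p N : ℂ) * wordMoment (μseq N) w) atTop (𝓝 (Λ w)))
    (w : List (Fin k)) :
    Tendsto (fun N => wordMoment (νseq N) w) atTop (𝓝 (fockMoment ε Λ w [])) := by
  choose L hL hpL using hpow
  simp only [fun N => (hpL N).wordMoment_eq (hνseq N)]
  refine tendsto_fockMoment (fun u hu => ?_) w []
  refine tendsto_mul_of_tendsto_mul_fockMoment hε (tendsto_natCast_atTop_cobounded.comp hp)
    (fun w hw => ?_) hu
  simpa only [hL _ w hw, Function.comp_apply] using hΛ w hw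

theorem isConditionallyPositive_of_tendsto_mul_wordMoment (hμseq : ∀ N, IsDc (μseq N))
    (hΛ : ∀ w ≠ [], Tendsto (fun N => (p N : ℂ) * wordMoment (μseq N) w) atTop (𝓝 (Λ w))) :
    IsConditionallyPositive Λ :=
  .of_tendsto (fun N => (isConditionallyPositive_of_posSemidef
    (posSemidef_wordKernel_wordMoment (hμseq N))).const_mul (Nat.cast_nonneg (p N))) hΛ

variable {ν'seq : ℕ → Dist k}

theorem exists_isDc_convInMoments (hε : IsIdempotentElem ε) (hε1 : ‖ε‖ ≤ 1)
    (hε' : IsIdempotentElem ε') (hε'_star : star ε' = ε') (hε'1 : ‖ε'‖ ≤ 1)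
    (hμseq : ∀ N, IsDc (μseq N)) (hp : Tendsto p atTop atTop)
    (hνseq : ∀ N, IsDalg (νseq N)) (hν'seq : ∀ N, IsDalg (ν'seq N))
    (hpow : ∀ N, IsConvPower ε (p N) (μseq N) (νseq N))
    (hpow' : ∀ N, IsConvPower ε' (p N) (μseq N) (ν'seq N))
    (hlim : ∃ ν, IsDc ν ∧ ConvInMoments νseq ν) : ∃ ν', IsDc ν' ∧ ConvInMoments ν'seq ν' := by
  obtain ⟨ν, hν, hconv⟩ := hlim
  obtain ⟨Λ, hνΛ, hΛ⟩ := exists_tendsto_mul_wordMoment hε hp hνseq hpow hconv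
  obtain ⟨D, hD, hbound⟩ := hνΛ.exists_norm_le hε hε1 hν
  have hΛ_pos := isConditionallyPositive_of_tendsto_mul_wordMoment hμseq hΛ
  obtain ⟨ν', hν', hν'Λ⟩ := hΛ_pos.exists_isDc hε' hε'_star hε'1 hD hbound
  refine ⟨ν', hν', convInMoments_iff_wordMoment.mpr fun w => ?_⟩
  rw [hν'Λ]
  exact tendsto_wordMoment_of_isConvPower hε' hp hν'seq hpow' hΛ w

end ConvPower

theorem isInfDiv_and_isBP_of_convInMoments {k : ℕ} {μ ν : Dist k} {μseq bseq fseq : ℕ → Dist k}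
    {p : ℕ → ℕ} (hμseq : ∀ N, IsDc (μseq N)) (hp : Tendsto p atTop atTop)
    (hbalg : ∀ N, IsDalg (bseq N)) (hfalg : ∀ N, IsDalg (fseq N))
    (hb : ∀ N, IsConvPower 0 (p N) (μseq N) (bseq N))
    (hf : ∀ N, IsConvPower 1 (p N) (μseq N) (fseq N))
    (hμ : IsDc μ) (hbμ : ConvInMoments bseq μ) (hfν : ConvInMoments fseq ν) :
    IsInfDiv ν ∧ IsBP μ ν := by
  obtain ⟨Λ, hμΛ, hΛ⟩ := exists_tendsto_mul_wordMoment .zero hp hbalg hb hbμ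
  have hνΛ : wordMoment ν = fun w => fockMoment 1 Λ w [] := funext fun w =>
    tendsto_nhds_unique (convInMoments_iff_wordMoment.mp hfν w)
      (tendsto_wordMoment_of_isConvPower .one hp hfalg hf hΛ w)
  have hν_cumulants : HasCumulants 1 ν Λ := fun w _ => congrFun hνΛ w
  have hΛ_pos := isConditionallyPositive_of_tendsto_mul_wordMoment hμseq hΛ
  obtain ⟨D, hD, hbound⟩ := hμΛ.exists_norm_le .zero (by simp) hμ
  obtain ⟨ρ, hρ, hρΛ⟩ := hΛ_pos.exists_isDc (k := k) .one (star_one ℂ) (by simp) hD hbound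
  have hν : IsDc ν := eq_of_wordMoment_eq (hρΛ.trans hνΛ.symm) ▸ hρ
  exact ⟨hΛ_pos.isInfDiv hν_cumulants hν, isBP_of_hasCumulants hμΛ hν_cumulants⟩

theorem statement13_general {k : ℕ} {μseq bseq fseq : ℕ → Dist k} {p : ℕ → ℕ}
    (hμseq : ∀ N, IsDc (μseq N)) (hp : Tendsto p atTop atTop)
    (hbalg : ∀ N, IsDalg (bseq N)) (hfalg : ∀ N, IsDalg (fseq N))
    (hb : ∀ N, IsNFoldBool (p N) (μseq N) (bseq N))
    (hf : ∀ N, IsNFoldFree (p N) (μseq N) (fseq N)) :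
    ((∃ ν : Dist k, IsDc ν ∧ ConvInMoments fseq ν) ↔
      (∃ μ : Dist k, IsDc μ ∧ ConvInMoments bseq μ)) ∧
    (∀ μ ν : Dist k, IsDc μ → ConvInMoments bseq μ → ConvInMoments fseq ν →
      IsInfDiv ν ∧ IsBP μ ν) := by
  simp only [isNFoldBool_iff] at hb
  simp only [isNFoldFree_iff] at hf
  refine ⟨⟨?_, ?_⟩, fun μ ν => isInfDiv_and_isBP_of_convInMoments hμseq hp hbalg hfalg hb hf⟩
  · exact exists_isDc_convInMoments .one (by simp) .zero (star_zero ℂ) (by simp)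
      hμseq hp hfalg hbalg hf hb
  · exact exists_isDc_convInMoments .zero (by simp) .one (star_one ℂ) (by simp)
      hμseq hp hbalg hfalg hb hf

/-- Theorem 1': for `(μ_N)` in `D_c(k)` and positive integers
`p₁ < p₂ < ⋯`, with `f_N` the `p_N`-fold free convolution and `b_N` the `p_N`-fold
Boolean convolution of `μ_N`: `f_N` converges in moments to some `⊞`-infinitely
divisible `ν ∈ D_c(k)` iff `b_N` converges in moments to some `μ ∈ D_c(k)`;
moreover in that case the limits satisfy `𝔹(μ) = ν`. -/
theorem statement13 (k : ℕ) (hk : 0 < k) (μseq : ℕ → Dist k)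
    (hμseq : ∀ N, IsDc (μseq N))
    (p : ℕ → ℕ) (hp : ∀ N, 0 < p N) (hpmono : StrictMono p)
    (bseq fseq : ℕ → Dist k)
    (hbalg : ∀ N, IsDalg (bseq N)) (hfalg : ∀ N, IsDalg (fseq N))
    (hb : ∀ N, IsNFoldBool (p N) (μseq N) (bseq N))
    (hf : ∀ N, IsNFoldFree (p N) (μseq N) (fseq N)) :
    ((∃ ν : Dist k, IsInfDiv ν ∧ ConvInMoments fseq ν) ↔
      (∃ μ : Dist k, IsDc μ ∧ ConvInMoments bseq μ)) ∧
    (∀ μ ν : Dist k, IsDc μ → ConvInMoments bseq μ →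
      IsInfDiv ν → ConvInMoments fseq ν → IsBP μ ν) := by
  obtain ⟨hiff, hlim⟩ :=
    statement13_general hμseq hpmono.tendsto_atTop hbalg hfalg hb hf
  refine ⟨⟨fun ⟨ν, hν, hfν⟩ => hiff.mp ⟨ν, hν.1, hfν⟩, fun ⟨μ, hμ, hbμ⟩ => ?_⟩,
    fun μ ν hμ hbμ _ hfν => (hlim μ ν hμ hbμ hfν).2⟩
  obtain ⟨ν, -, hfν⟩ := hiff.mpr ⟨μ, hμ, hbμ⟩
  exact ⟨ν, (hlim μ ν hμ hbμ hfν).1, hfν⟩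

end BBP
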